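/- arXiv:math/9705223 — 4 statements merged into one kernel-verified Lean document; each statement's English description precedes it below -/
import Mathlib

section
/- Let a and n be positive integers, and write (1 + y + y^2 + ... + y^{a-1})^n = \sum_{k=0}^{n(a-1)} c_k y^k in \mathbb{Q}[y]. Let f \in \mathbb{Q}[y] be a polynomial of degree less than n. Then for every integer i with 0 \le i \le a-1, the polynomial \sum_{0 \le k \le n(a-1),\ k \equiv i \ (mod\ a)} c_k \cdot f(y-k) is independent of i; equivalently, for each such i it equals (1/a) \cdot \sum_{k=0}^{n(a-1)} c_k \cdot f(y-k). -/
open Polynomial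

/-!
Write `G = 1 + X + ... + X^(a-1)` and let `pᵢ` be the part of a polynomial `p` supported on the
exponents congruent to `i` modulo `a`. Since `(G * p)ᵢ = ∑_{k < a} X^k * p_{i-k}` and
`∑_{k < a} p_{i-k} = p` for every `i`, we have
`(G * p)ᵢ - (G * p)ⱼ = ∑_{k < a} (X^k - 1) * (p_{i-k} - p_{j-k})`.
Each multiplication by `G` thus makes the differences between residue parts divisible by one
further power of `1 - X`, so `(1 - X)^n` divides the differences for `G^n`. Substituting the shift
`S` for `X` concludes, as `(1 - S)^n` kills the polynomials of degree less than `n`.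
-/

theorem sum_range_natCast_zmod {M : Type*} [AddCommMonoid M] (a : ℕ) [NeZero a] (F : ZMod a → M) :
    ∑ k ∈ Finset.range a, F k = ∑ z, F z :=
  Finset.sum_nbij' (fun k ↦ (k : ZMod a)) ZMod.val (by simp)
    (fun z _ ↦ Finset.mem_range.2 z.val_lt)
    (fun _ hk ↦ ZMod.val_cast_of_lt (Finset.mem_range.1 hk)) (by simp) (by simp)

section Semiring

variable {R : Type*} [Semiring R] {a : ℕ}

/-- The part of a polynomial supported on the exponents in the residue class `i` modulo `a`,
as a linear map. -/
noncomputable def residuePart (i : ZMod a) : R[X] →ₗ[R] R[X] :=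
  lsum fun k ↦ if (k : ZMod a) = i then monomial k else 0

theorem residuePart_monomial (i : ZMod a) (k : ℕ) (r : R) :
    residuePart i (monomial k r) = if (k : ZMod a) = i then monomial k r else 0 := by
  rw [residuePart, lsum_apply, sum_monomial_index r _ (by simp)]
  split_ifs <;> rfl

theorem residuePart_eq_sum_range (i : ZMod a) {p : R[X]} {N : ℕ} (hp : p.natDegree < N) :
    residuePart i p =
      ∑ k ∈ Finset.range N with ((k : ℕ) : ZMod a) = i, monomial k (p.coeff k) := by
  conv_lhs => rw [p.as_sum_range' N hp]
  simp only [map_sum, residuePart_monomial, Finset.sum_filter]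

theorem sum_residuePart [NeZero a] (p : R[X]) : ∑ i : ZMod a, residuePart i p = p := by
  induction p using Polynomial.induction_on' with
  | add p q hp hq => simp only [map_add, Finset.sum_add_distrib, hp, hq]
  | monomial k r => simp [residuePart_monomial]

theorem sum_range_residuePart_sub [NeZero a] (i : ZMod a) (p : R[X]) :
    ∑ k ∈ Finset.range a, residuePart (i - (k : ZMod a)) p = p := by
  rw [sum_range_natCast_zmod a fun z ↦ residuePart (i - z) p]
  exact ((Equiv.subLeft i).sum_comp fun z ↦ residuePart z p).trans (sum_residuePart p)

theorem residuePart_X_pow_mul (i : ZMod a) (k : ℕ) (p : R[X]) :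
    residuePart i (X ^ k * p) = X ^ k * residuePart (i - (k : ZMod a)) p := by
  induction p using Polynomial.induction_on' with
  | add p q hp hq => simp only [mul_add, map_add, hp, hq]
  | monomial m r =>
    simp only [X_pow_mul_monomial, residuePart_monomial, mul_ite, mul_zero, Nat.cast_add,
      eq_sub_iff_add_eq]

theorem natDegree_geom_sum_pow_le (a n : ℕ) :
    ((∑ j ∈ Finset.range a, (X : R[X]) ^ j) ^ n).natDegree ≤ n * (a - 1) :=
  natDegree_pow_le_of_le n <| natDegree_sum_le_of_forall_le _ _ fun _ hj ↦
    (natDegree_X_pow_le _).trans (Nat.le_sub_one_of_lt (Finset.mem_range.1 hj))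

end Semiring

theorem residuePart_geom_sum_mul_sub {R : Type*} [Ring R] {a : ℕ} [NeZero a] (i j : ZMod a)
    (p : R[X]) :
    residuePart i ((∑ k ∈ Finset.range a, X ^ k) * p) -
        residuePart j ((∑ k ∈ Finset.range a, X ^ k) * p) =
      ∑ k ∈ Finset.range a, (X ^ k - 1) *
        (residuePart (i - (k : ZMod a)) p - residuePart (j - (k : ZMod a)) p) := by
  simp only [Finset.sum_mul, map_sum, residuePart_X_pow_mul, mul_sub, sub_mul, one_mul,
    Finset.sum_sub_distrib, sum_range_residuePart_sub]
  abel

section CommRing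

variable {R M : Type*} [CommRing R] [AddCommGroup M] [Module R M] {a : ℕ} [NeZero a]

theorem one_sub_X_pow_dvd_residuePart_geom_sum_pow_sub (n : ℕ) (i j : ZMod a) :
    (1 - X : R[X]) ^ n ∣ residuePart i ((∑ k ∈ Finset.range a, X ^ k) ^ n) -
      residuePart j ((∑ k ∈ Finset.range a, X ^ k) ^ n) := by
  induction n generalizing i j with
  | zero => simp
  | succ n ih =>
    rw [pow_succ' (∑ k ∈ Finset.range a, X ^ k), residuePart_geom_sum_mul_sub, pow_succ']
    refine Finset.dvd_sum fun k _ ↦ mul_dvd_mul ?_ (ih _ _)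
    rw [dvd_sub_comm]
    exact one_sub_dvd_one_sub_pow X k

theorem aeval_residuePart_geom_sum_pow_apply_eq {T : Module.End R M} {n : ℕ} {m : M}
    (hm : ((1 - T) ^ n) m = 0) (i j : ZMod a) :
    aeval T (residuePart i ((∑ k ∈ Finset.range a, (X : R[X]) ^ k) ^ n)) m =
      aeval T (residuePart j ((∑ k ∈ Finset.range a, (X : R[X]) ^ k) ^ n)) m := by
  obtain ⟨q, hq⟩ := one_sub_X_pow_dvd_residuePart_geom_sum_pow_sub (R := R) n i j
  rw [← sub_eq_zero, ← LinearMap.sub_apply, ← map_sub, hq, mul_comm, map_mul,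
    Module.End.mul_apply]
  simp [hm]

theorem nsmul_aeval_residuePart_geom_sum_pow_apply {T : Module.End R M} {n : ℕ} {m : M}
    (hm : ((1 - T) ^ n) m = 0) (i : ZMod a) :
    a • aeval T (residuePart i ((∑ k ∈ Finset.range a, (X : R[X]) ^ k) ^ n)) m =
      aeval T ((∑ k ∈ Finset.range a, (X : R[X]) ^ k) ^ n) m := by
  conv_rhs => rw [← sum_residuePart (a := a) ((∑ k ∈ Finset.range a, X ^ k) ^ n)]
  rw [map_sum, LinearMap.sum_apply,
    Finset.sum_congr rfl fun j _ ↦ aeval_residuePart_geom_sum_pow_apply_eq hm j i]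
  simp

end CommRing

section Ring

variable {R : Type*} [Ring R]

theorem degree_sub_taylor_lt {f : R[X]} (hf : f ≠ 0) (r : R) :
    (f - taylor r f).degree < f.degree :=
  degree_sub_lt_left (degree_taylor f r).symm hf (leadingCoeff_taylor r f).symm

theorem one_sub_taylor_pow_apply_eq_zero {n : ℕ} {f : R[X]} (hf : f.degree < n) (r : R) :
    ((1 - taylor r : Module.End R R[X]) ^ n) f = 0 := by
  induction n generalizing f with
  | zero => simpa using hf
  | succ n ih =>
    rw [pow_succ, Module.End.mul_apply]
    obtain rfl | hf₀ := eq_or_ne f 0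
    · simp
    · exact ih ((degree_sub_taylor_lt hf₀ r).trans_le (degree_le_of_natDegree_le
        (Nat.le_of_lt_succ ((natDegree_lt_iff_degree_lt hf₀).2 hf))))

end Ring

theorem taylor_pow_apply {R : Type*} [CommSemiring R] (r : R) (k : ℕ) (f : R[X]) :
    ((taylor r : Module.End R R[X]) ^ k) f = taylor (k * r) f := by
  induction k with
  | zero => simp
  | succ k ih =>
    rw [pow_succ', Module.End.mul_apply, ih, taylor_taylor]
    congr 2
    push_cast
    ring

section Shift

variable {R : Type*} [CommRing R]

theorem aeval_taylor_neg_one_monomial_apply (k : ℕ) (c : R) (f : R[X]) :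
    aeval (taylor (-1 : R) : Module.End R R[X]) (monomial k c) f =
      c • f.comp (X - C (k : R)) := by
  rw [aeval_monomial, Module.End.mul_apply, taylor_pow_apply, Module.algebraMap_end_apply,
    taylor_apply, mul_neg_one, C_neg, sub_eq_add_neg]

theorem aeval_taylor_neg_one_apply_eq_sum_range {p : R[X]} {N : ℕ}
    (hp : p.natDegree < N) (f : R[X]) :
    aeval (taylor (-1 : R) : Module.End R R[X]) p f =
      ∑ k ∈ Finset.range N, p.coeff k • f.comp (X - C (k : R)) := by
  conv_lhs => rw [p.as_sum_range' N hp]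
  simp only [map_sum, LinearMap.sum_apply, aeval_taylor_neg_one_monomial_apply]

theorem aeval_taylor_neg_one_residuePart_apply_eq_sum_filter {p : R[X]} {N : ℕ}
    (hp : p.natDegree < N) (f : R[X]) {a i : ℕ} (hi : i < a) :
    aeval (taylor (-1 : R) : Module.End R R[X]) (residuePart (i : ZMod a) p) f =
      ∑ k ∈ Finset.range N with k % a = i, p.coeff k • f.comp (X - C (k : R)) := by
  simp only [residuePart_eq_sum_range _ hp, map_sum, LinearMap.sum_apply,
    aeval_taylor_neg_one_monomial_apply, ZMod.natCast_eq_natCast_iff', Nat.mod_eq_of_lt hi]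

end Shift

theorem statement0_general {R : Type*} [CommRing R] {a n : ℕ} {c : ℕ → R}
    (hc : ∀ k, c k = ((∑ j ∈ Finset.range a, (X : R[X]) ^ j) ^ n).coeff k)
    {f : R[X]} (hf : f.degree < n) {i : ℕ} (hi : i < a) :
    (∀ j < a,
      ∑ k ∈ Finset.range (n * (a - 1) + 1) with k % a = i, c k • f.comp (X - C (k : R)) =
        ∑ k ∈ Finset.range (n * (a - 1) + 1) with k % a = j, c k • f.comp (X - C (k : R))) ∧
    a • ∑ k ∈ Finset.range (n * (a - 1) + 1) with k % a = i, c k • f.comp (X - C (k : R)) =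
      ∑ k ∈ Finset.range (n * (a - 1) + 1), c k • f.comp (X - C (k : R)) := by
  have : NeZero a := ⟨Nat.ne_zero_of_lt hi⟩
  have hdeg := Nat.lt_succ_of_le (natDegree_geom_sum_pow_le (R := R) a n)
  have hkill := one_sub_taylor_pow_apply_eq_zero hf (-1)
  simp only [hc, ← aeval_taylor_neg_one_apply_eq_sum_range hdeg]
  refine ⟨fun j hj ↦ ?_, ?_⟩
  · rw [← aeval_taylor_neg_one_residuePart_apply_eq_sum_filter hdeg f hi,
      ← aeval_taylor_neg_one_residuePart_apply_eq_sum_filter hdeg f hj]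
    exact aeval_residuePart_geom_sum_pow_apply_eq hkill _ _
  · rw [← aeval_taylor_neg_one_residuePart_apply_eq_sum_filter hdeg f hi]
    exact nsmul_aeval_residuePart_geom_sum_pow_apply hkill _

/-- Lemma 2.2. Writing `(1 + y + ... + y^(a-1))^n = ∑ c_k y^k`, for any
polynomial `f` of degree less than `n` and any `0 ≤ i ≤ a-1`, the sum
`∑_{k ≡ i (mod a)} c_k f(y-k)` is independent of `i`, i.e. equals
`(1/a) ∑_k c_k f(y-k)`. -/
theorem statement0 (a n : ℕ) (ha : 1 ≤ a) (hn : 1 ≤ n)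
    (c : ℕ → ℚ)
    (hc : ∀ k, c k = (((∑ j ∈ Finset.range a, (X : ℚ[X]) ^ j)) ^ n).coeff k)
    (f : ℚ[X]) (hf : f.degree < n)
    (i : ℕ) (hi : i ≤ a - 1) :
    ∑ k ∈ (Finset.range (n * (a - 1) + 1)).filter (fun k => k % a = i),
        c k • f.comp (X - C (k : ℚ))
      = (1 / (a : ℚ)) •
        ∑ k ∈ Finset.range (n * (a - 1) + 1), c k • f.comp (X - C (k : ℚ)) := by
  rw [one_div, eq_inv_smul_iff₀ (Nat.cast_ne_zero.2 (Nat.ne_zero_of_lt ha)), Nat.cast_smul_eq_nsmul]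
  exact (statement0_general hc hf (Nat.lt_of_le_sub_one ha hi)).2
end

section
/- Let n \ge 2 and a \ge 1 be integers and write (1 + y + y^2 + ... + y^{a-1})^n = \sum_{k=0}^{n(a-1)} c_k y^k. Then for every integer q > an, N_A(n,q,0,a) = q \cdot \sum_{j \ge 0,\ aj \le q-n} j^{n-1} \, c_{q-n-aj}, i.e. N_A(n,q,0,a) equals q times the coefficient of y^{q-n} in the power series (1 + y + ... + y^{a-1})^n \sum_{j=0}^{\infty} j^{n-1} y^{aj}. -/
open Polynomial

/-- `x` avoids the integer interval `[u, v]` in `ZMod q`. -/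
def Avoids {q : ℕ} (x : ZMod q) (u v : ℤ) : Prop :=
  ∀ k : ℤ, u ≤ k → k ≤ v → x ≠ (k : ZMod q)

/-- The number of `n`-tuples over `ZMod q` all of whose pairwise differences
avoid the integer interval `[u, v]`. -/
noncomputable def N_A (n q : ℕ) (u v : ℤ) : ℕ :=
  Set.ncard {x : Fin n → ZMod q |
    ∀ i j : Fin n, i < j → Avoids (x i - x j) u v}

/-!
Write `n = m + 2`. Rotating the circle `ZMod q` so that the last coordinate is `0` turns the other
`m + 1` coordinates into integers `z i` such that, for `i < j`, either `z i + 1 ≤ z j` or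
`z j + 1 + a ≤ z i`. List these integers in increasing order: consecutive gaps are at least `1`,
and at least `1 + a` where the labels descend. Replacing the pair `(1, 1 + a)` by `(0, 1)` imposes
no condition on the tuple, but the sorted list still has its gaps bounded below according to the
descents. Hence the generating functions in the length of the interval, for avoiding tuples and for
all tuples, are `∑ σ, X ^ (m + 1 + a * des σ) / (1 - X) ^ (m + 2)` and
`∑ σ, X ^ (1 + des σ) / (1 - X) ^ (m + 2) = ∑ j, j ^ (m + 1) X ^ j`. The substitution `X ↦ X ^ a`
in the second one gives the first up to a power of `X` and the factor
`((1 - X ^ a) / (1 - X)) ^ (m + 2)`, which is `(1 + X + ⋯ + X ^ (a - 1)) ^ n`.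
-/

section Descents

open Finset

variable {m : ℕ} {α : Type*} [LinearOrder α]

/-- The descent set of a finite sequence: position `k` stands for a descent from the `k`-th to the
`(k + 1)`-st term. -/
def descents (f : Fin (m + 1) → α) : Finset (Fin m) :=
  {k | f k.succ < f k.castSucc}

lemma mem_descents {f : Fin (m + 1) → α} {k : Fin m} :
    k ∈ descents f ↔ f k.succ < f k.castSucc := by
  simp [descents]

lemma exists_mem_descents_of_lt {f : Fin (m + 1) → α} {s t : Fin (m + 1)} (hst : s ≤ t)
    (hf : f t < f s) : ∃ k ∈ descents f, s ≤ k.castSucc ∧ k.succ ≤ t := by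
  induction t using Fin.induction with
  | zero => exact absurd hf (by simp [Fin.le_zero_iff.1 hst])
  | succ i ih =>
    have hsi : s ≤ i.castSucc :=
      Fin.le_castSucc_iff.2 (hst.lt_of_ne fun h => by simp [h] at hf)
    by_cases hi : i ∈ descents f
    · exact ⟨i, hi, hsi, le_rfl⟩
    · have hle : f i.castSucc ≤ f i.succ := not_lt.1 (mt mem_descents.2 hi)
      obtain ⟨k, hk, hsk, hki⟩ := ih hsi (hle.trans_lt hf)
      exact ⟨k, hk, hsk, hki.trans Fin.castSucc_lt_succ.le⟩

end Descents

section Chains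

open Finset

variable {m : ℕ}

/-- The sequences of natural numbers below `L` whose `k`-th gap is at least `δ k`. -/
def chains (δ : Fin m → ℕ) (L : ℕ) : Finset (Fin (m + 1) → ℕ) :=
  {g ∈ Fintype.piFinset fun _ => range L | ∀ k : Fin m, g k.castSucc + δ k ≤ g k.succ}

lemma mem_chains {δ : Fin m → ℕ} {L : ℕ} {g : Fin (m + 1) → ℕ} :
    g ∈ chains δ L ↔ (∀ i, g i < L) ∧ ∀ k : Fin m, g k.castSucc + δ k ≤ g k.succ := by
  simp [chains]

lemma mem_chains_iff_last_lt {δ : Fin m → ℕ} {L : ℕ} {g : Fin (m + 1) → ℕ} :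
    g ∈ chains δ L ↔ g (Fin.last m) < L ∧ ∀ k : Fin m, g k.castSucc + δ k ≤ g k.succ := by
  refine mem_chains.trans (and_congr_left fun hg => ⟨fun h => h _, fun h i => ?_⟩)
  have hmono : Monotone g := Fin.monotone_iff_le_succ.2 fun k => le_of_add_le_left (hg k)
  exact (hmono (Fin.le_last i)).trans_lt h

lemma snoc_mem_chains {δ : Fin (m + 1) → ℕ} {L t : ℕ} {g : Fin (m + 1) → ℕ} :
    (Fin.snoc g t : Fin (m + 2) → ℕ) ∈ chains δ L ↔
      t < L ∧ g ∈ chains (Fin.init δ) (t + 1 - δ (Fin.last m)) := by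
  simp only [mem_chains_iff_last_lt, Fin.forall_fin_succ', Fin.succ_last, Fin.succ_castSucc,
    Fin.snoc_last, Fin.snoc_castSucc, Fin.init]
  have hlast : g (Fin.last m) + δ (Fin.last m) ≤ t ↔ g (Fin.last m) < t + 1 - δ (Fin.last m) := by
    omega
  rw [hlast, and_comm (b := g (Fin.last m) < _)]

lemma card_filter_last_eq {δ : Fin (m + 1) → ℕ} {L t : ℕ} (ht : t < L) :
    #{g ∈ chains δ L | g (Fin.last _) = t} = #(chains (Fin.init δ) (t + 1 - δ (Fin.last m))) := by
  refine card_bij' (fun g _ => Fin.init g) (fun g _ => (Fin.snoc g t : Fin (m + 2) → ℕ))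
    (fun g hg => ?_) (fun g hg => ?_) (fun g hg => ?_) (fun g _ => Fin.init_snoc _ _)
  · obtain ⟨hg, rfl⟩ := mem_filter.1 hg
    exact (snoc_mem_chains.1 (by rwa [Fin.snoc_init_self])).2
  · exact mem_filter.2 ⟨snoc_mem_chains.2 ⟨ht, hg⟩, Fin.snoc_last _ _⟩
  · obtain ⟨-, rfl⟩ := mem_filter.1 hg
    exact Fin.snoc_init_self g

lemma card_chains_succ (δ : Fin (m + 1) → ℕ) (L : ℕ) :
    #(chains δ L) = ∑ t ∈ range L, #(chains (Fin.init δ) (t + 1 - δ (Fin.last m))) := by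
  rw [card_eq_sum_card_fiberwise (f := fun g => g (Fin.last _)) (t := range L)
    fun g hg => by simpa using (mem_chains.1 hg).1 (Fin.last _)]
  exact sum_congr rfl fun t ht => card_filter_last_eq (mem_range.1 ht)

lemma card_chains_zero (δ : Fin m → ℕ) : #(chains δ 0) = 0 := by
  simp [card_eq_zero, eq_empty_iff_forall_notMem, mem_chains]

lemma card_chains_fin_zero (δ : Fin 0 → ℕ) (L : ℕ) : #(chains δ L) = L := by
  simp [chains]

variable (R : Type*) [CommRing R]

lemma mk_card_chains_mul_one_sub_X_pow (δ : Fin m → ℕ) :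
    (PowerSeries.mk fun L => (#(chains δ L) : R)) * (1 - PowerSeries.X) ^ (m + 2) =
      PowerSeries.X ^ (∑ k, δ k + 1) := by
  induction m with
  | zero =>
    have hmul : (PowerSeries.mk fun L => (#(chains δ L) : R)) * (1 - PowerSeries.X) =
        PowerSeries.mk 1 * PowerSeries.X := by
      ext L
      cases L <;> simp [mul_sub, PowerSeries.coeff_succ_mul_X, card_chains_fin_zero]
    rw [pow_two, ← mul_assoc, hmul, mul_right_comm, PowerSeries.mk_one_mul_one_sub_eq_one]
    simp
  | succ m ih =>
    have hstep : (PowerSeries.mk fun L => (#(chains δ L) : R)) * (1 - PowerSeries.X) =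
        PowerSeries.X ^ δ (Fin.last m) *
          PowerSeries.mk fun L => (#(chains (Fin.init δ) L) : R) := by
      ext L
      rw [PowerSeries.coeff_X_pow_mul']
      cases L with
      | zero => simp [mul_sub, card_chains_zero]
      | succ L =>
        simp only [mul_sub, mul_one, map_sub, PowerSeries.coeff_succ_mul_X, PowerSeries.coeff_mk,
          card_chains_succ δ, sum_range_succ, Nat.cast_add, add_sub_cancel_left]
        split_ifs with h
        · rfl
        · rw [Nat.sub_eq_zero_of_le (by omega), card_chains_zero, Nat.cast_zero]
    rw [pow_succ', ← mul_assoc, hstep, mul_assoc, ih, ← pow_add, Fin.sum_univ_castSucc]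
    simp only [Fin.init]
    ring

end Chains

section SpacedTuples

open Finset

variable {m b a L : ℕ}

/-- For `i < j`, the entry `z j` is at least `b` above `z i` or at least `b + a` below it. For
`b = 1` this is the avoidance condition of the theorem, freed from the cyclic structure; for
`b = 0` and `a = 1` it holds for every tuple. -/
def IsSpaced (b a : ℕ) (z : Fin m → ℕ) : Prop :=
  ∀ i j : Fin m, i < j → z i + b ≤ z j ∨ z j + b + a ≤ z i

instance (b a : ℕ) : DecidablePred (IsSpaced (m := m) b a) := fun z =>
  inferInstanceAs (Decidable (∀ i j : Fin m, i < j → z i + b ≤ z j ∨ z j + b + a ≤ z i))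

/-- The spaced `m`-tuples of natural numbers below `L`. -/
def spacedTuples (m b a L : ℕ) : Finset (Fin m → ℕ) :=
  {z ∈ Fintype.piFinset fun _ => range L | IsSpaced b a z}

lemma mem_spacedTuples {z : Fin m → ℕ} :
    z ∈ spacedTuples m b a L ↔ (∀ i, z i < L) ∧ IsSpaced b a z := by
  simp [spacedTuples]

lemma card_spacedTuples_zero_one : #(spacedTuples m 0 1 L) = L ^ m := by
  have hspaced (z : Fin m → ℕ) : IsSpaced 0 1 z := fun i j _ => by omega
  simp [spacedTuples, hspaced]

lemma card_spacedTuples_succ_zero : #(spacedTuples (m + 1) b a 0) = 0 := by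
  simp [card_eq_zero, eq_empty_iff_forall_notMem, mem_spacedTuples]

/-- The least admissible gaps of a spaced tuple sorted by `σ`: between the `k`-th and the
`(k + 1)`-st smallest entry it is `b`, and `b + a` where `σ` descends. -/
def descentGap (b a : ℕ) (σ : Equiv.Perm (Fin (m + 1))) (k : Fin m) : ℕ :=
  b + if k ∈ descents σ then a else 0

lemma sum_descentGap (σ : Equiv.Perm (Fin (m + 1))) :
    ∑ k, descentGap b a σ k = m * b + a * #(descents σ) := by
  simp [descentGap, sum_add_distrib, mul_comm]

lemma add_le_of_descentGap {z : Fin (m + 1) → ℕ} {σ : Equiv.Perm (Fin (m + 1))}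
    (h : ∀ k : Fin m, z (σ k.castSucc) + descentGap b a σ k ≤ z (σ k.succ))
    {s t : Fin (m + 1)} (hst : s < t) :
    z (σ s) + b ≤ z (σ t) ∧ (σ t < σ s → z (σ s) + b + a ≤ z (σ t)) := by
  have hmono : Monotone (z ∘ σ) :=
    Fin.monotone_iff_le_succ.2 fun k => le_of_add_le_left (h k)
  have hgap (k : Fin m) (hsk : s ≤ k.castSucc) (hkt : k.succ ≤ t) :
      z (σ s) + descentGap b a σ k ≤ z (σ t) :=
    (Nat.add_le_add_right (hmono hsk) _).trans ((h k).trans (hmono hkt))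
  constructor
  · obtain ⟨k, rfl⟩ := Fin.exists_succ_eq_of_ne_zero (Fin.ne_zero_of_lt hst)
    exact le_trans (by simp [descentGap]) (hgap k (Fin.le_castSucc_iff.2 hst) le_rfl)
  · intro hdesc
    obtain ⟨k, hk, hsk, hkt⟩ := exists_mem_descents_of_lt hst.le hdesc
    simpa [descentGap, hk, add_assoc] using hgap k hsk hkt

lemma IsSpaced.add_descentGap_le {z : Fin (m + 1) → ℕ} (hz : IsSpaced b a z) (hab : 0 < b + a)
    (k : Fin m) :
    z (Tuple.sort z k.castSucc) + descentGap b a (Tuple.sort z) k ≤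
      z (Tuple.sort z k.succ) := by
  obtain ⟨hmono, htie⟩ := Tuple.eq_sort_iff.1 (rfl : Tuple.sort z = Tuple.sort z)
  set σ := Tuple.sort z
  have hk : k.castSucc < k.succ := Fin.castSucc_lt_succ
  have hle : z (σ k.castSucc) ≤ z (σ k.succ) := hmono hk.le
  by_cases hdesc : σ k.succ < σ k.castSucc
  · have hne : z (σ k.castSucc) ≠ z (σ k.succ) := fun h => (htie _ _ hk h).not_gt hdesc
    have := hz _ _ hdesc
    simp only [descentGap, mem_descents, if_pos hdesc]
    omega
  · have hasc : σ k.castSucc < σ k.succ := (not_lt.1 hdesc).lt_of_ne (σ.injective.ne hk.ne)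
    have := hz _ _ hasc
    simp only [descentGap, mem_descents, if_neg hdesc]
    omega

lemma isSpaced_and_sort_eq_iff (hab : 0 < b + a) {z : Fin (m + 1) → ℕ}
    {σ : Equiv.Perm (Fin (m + 1))} :
    IsSpaced b a z ∧ Tuple.sort z = σ ↔
      ∀ k : Fin m, z (σ k.castSucc) + descentGap b a σ k ≤ z (σ k.succ) := by
  constructor
  · rintro ⟨hz, rfl⟩
    exact hz.add_descentGap_le hab
  · intro h
    refine ⟨fun i j hij => ?_, (Tuple.eq_sort_iff.2 ⟨?_, fun s t hst heq => ?_⟩).symm⟩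
    · obtain ⟨s, rfl⟩ := σ.surjective i
      obtain ⟨t, rfl⟩ := σ.surjective j
      rcases lt_trichotomy s t with hst | rfl | hts
      · exact Or.inl (add_le_of_descentGap h hst).1
      · exact absurd hij (lt_irrefl _)
      · exact Or.inr ((add_le_of_descentGap h hts).2 hij)
    · exact Fin.monotone_iff_le_succ.2 fun k => le_of_add_le_left (h k)
    · refine (le_of_not_gt fun hdesc => ?_).lt_of_ne (σ.injective.ne hst.ne)
      have := (add_le_of_descentGap h hst).2 hdesc
      omega

lemma card_filter_sort_eq (hab : 0 < b + a) (σ : Equiv.Perm (Fin (m + 1))) :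
    #{z ∈ spacedTuples (m + 1) b a L | Tuple.sort z = σ} = #(chains (descentGap b a σ) L) := by
  refine card_bij' (fun z _ => z ∘ σ) (fun g _ => g ∘ σ.symm) (fun z hz => ?_) (fun g hg => ?_)
    (fun z _ => by ext; simp) (fun g _ => by ext; simp)
  · rw [mem_filter, mem_spacedTuples, and_assoc, isSpaced_and_sort_eq_iff hab] at hz
    exact mem_chains.2 ⟨fun i => hz.1 (σ i), hz.2⟩
  · rw [mem_filter, mem_spacedTuples, and_assoc, isSpaced_and_sort_eq_iff hab]
    rw [mem_chains] at hg
    exact ⟨fun i => hg.1 _, by simpa using hg.2⟩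

lemma card_spacedTuples (hab : 0 < b + a) :
    #(spacedTuples (m + 1) b a L) =
      ∑ σ : Equiv.Perm (Fin (m + 1)), #(chains (descentGap b a σ) L) := by
  rw [card_eq_sum_card_fiberwise (f := Tuple.sort) (t := univ) fun z _ => by simp]
  exact sum_congr rfl fun σ _ => card_filter_sort_eq hab σ

end SpacedTuples

section GeneratingFunctions

open Finset

variable (R : Type*) [CommRing R]

lemma mk_card_spacedTuples_mul_one_sub_X_pow (m : ℕ) {b a : ℕ} (hab : 0 < b + a) :
    (PowerSeries.mk fun L => (#(spacedTuples (m + 1) b a L) : R)) *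
        (1 - PowerSeries.X) ^ (m + 2) =
      ∑ σ : Equiv.Perm (Fin (m + 1)), PowerSeries.X ^ (m * b + a * #(descents σ) + 1) := by
  have hmk : (PowerSeries.mk fun L => (#(spacedTuples (m + 1) b a L) : R)) =
      ∑ σ : Equiv.Perm (Fin (m + 1)),
        PowerSeries.mk fun L => (#(chains (descentGap b a σ) L) : R) := by
    ext L
    simp [card_spacedTuples hab]
  simp only [hmk, sum_mul, mk_card_chains_mul_one_sub_X_pow, sum_descentGap]

lemma mk_pow_mul_one_sub_X_pow (m : ℕ) :
    (PowerSeries.mk fun j => (j : R) ^ (m + 1)) * (1 - PowerSeries.X) ^ (m + 2) =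
      ∑ σ : Equiv.Perm (Fin (m + 1)), PowerSeries.X ^ (#(descents σ) + 1) := by
  simpa [card_spacedTuples_zero_one] using
    mk_card_spacedTuples_mul_one_sub_X_pow R m (b := 0) (a := 1) one_pos

lemma expand_mk_pow_mul_geom_sum_pow (m : ℕ) {a : ℕ} (ha : a ≠ 0) :
    PowerSeries.expand a ha (PowerSeries.mk fun j => (j : R) ^ (m + 1)) *
          (∑ i ∈ range a, PowerSeries.X ^ i) ^ (m + 2) * (1 - PowerSeries.X) ^ (m + 2) =
      ∑ σ : Equiv.Perm (Fin (m + 1)), PowerSeries.X ^ (a * (#(descents σ) + 1)) := by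
  rw [mul_assoc, ← mul_pow, geom_sum_mul_neg]
  simpa [← pow_mul] using congrArg (PowerSeries.expand a ha) (mk_pow_mul_one_sub_X_pow R m)

lemma X_pow_mul_mk_card_spacedTuples (m : ℕ) {a : ℕ} (ha : a ≠ 0) :
    PowerSeries.X ^ a * (PowerSeries.mk fun L => (#(spacedTuples (m + 1) 1 a L) : R)) =
      PowerSeries.X ^ (m + 1) * ((∑ i ∈ range a, PowerSeries.X ^ i) ^ (m + 2) *
        PowerSeries.expand a ha (PowerSeries.mk fun j => (j : R) ^ (m + 1))) := by
  have hunit : IsUnit ((1 - PowerSeries.X : PowerSeries R) ^ (m + 2)) :=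
    (IsUnit.of_mul_eq_one_right _ (PowerSeries.mk_one_mul_one_sub_eq_one R)).pow _
  refine hunit.mul_right_cancel ?_
  rw [mul_assoc, mk_card_spacedTuples_mul_one_sub_X_pow R m (by omega), mul_assoc,
    mul_comm (_ ^ (m + 2)) (PowerSeries.expand a ha _), expand_mk_pow_mul_geom_sum_pow,
    mul_sum, mul_sum]
  exact sum_congr rfl fun σ _ => by ring

variable {R}

lemma coeff_mul_expand (p f : PowerSeries R) {a : ℕ} (ha : a ≠ 0) {r N : ℕ} (hrN : r < N) :
    PowerSeries.coeff r (p * PowerSeries.expand a ha f) =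
      ∑ j ∈ range N, if a * j ≤ r then
        PowerSeries.coeff j f * PowerSeries.coeff (r - a * j) p else 0 := by
  have hle (j : ℕ) : j ≤ a * j := Nat.le_mul_of_pos_left j (Nat.pos_of_ne_zero ha)
  rw [mul_comm, PowerSeries.coeff_mul, Nat.sum_antidiagonal_eq_sum_range_succ_mk]
  simp only [PowerSeries.coeff_expand, ite_mul, zero_mul, ← sum_filter]
  refine sum_nbij' (· / a) (a * ·) (fun k hk => ?_) (fun j hj => ?_) (fun k hk => ?_)
    (fun j _ => Nat.mul_div_cancel_left j (Nat.pos_of_ne_zero ha)) (fun k hk => ?_)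
  · obtain ⟨hk, j, rfl⟩ := mem_filter.1 hk
    have := hle j
    have := mem_range.1 hk
    rw [Nat.mul_div_cancel_left j (Nat.pos_of_ne_zero ha)]
    exact mem_filter.2 ⟨mem_range.2 (by omega), by omega⟩
  · exact mem_filter.2 ⟨mem_range.2 (Nat.lt_succ_of_le (mem_filter.1 hj).2), dvd_mul_right a j⟩
  · exact Nat.mul_div_cancel' (mem_filter.1 hk).2
  · rw [Nat.mul_div_cancel' (mem_filter.1 hk).2]

lemma coeff_geom_sum_pow (a n k : ℕ) :
    PowerSeries.coeff k ((∑ i ∈ range a, PowerSeries.X ^ i) ^ n : PowerSeries R) =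
      (((∑ i ∈ range a, (X : ℕ[X]) ^ i) ^ n).coeff k : R) := by
  have hcoe : ((∑ i ∈ range a, PowerSeries.X ^ i) ^ n : PowerSeries R) =
      Polynomial.coeToPowerSeries.ringHom
        (((∑ i ∈ range a, (X : ℕ[X]) ^ i) ^ n).map (Nat.castRingHom R)) := by
    simp only [Polynomial.map_pow, Polynomial.map_sum, Polynomial.map_X, map_pow, map_sum,
      Polynomial.coeToPowerSeries.ringHom_apply, Polynomial.coe_X]
  rw [hcoe, Polynomial.coeToPowerSeries.ringHom_apply, Polynomial.coeff_coe, Polynomial.coeff_map,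
    eq_natCast]

lemma card_spacedTuples_eq_sum_coeff (m : ℕ) {a q : ℕ} (ha : a ≠ 0) (hq : m + 2 ≤ q) :
    #(spacedTuples (m + 1) 1 a (q - (a + 1))) =
      ∑ j ∈ range q, if a * j ≤ q - (m + 2) then
        j ^ (m + 1) * ((∑ i ∈ range a, (X : ℕ[X]) ^ i) ^ (m + 2)).coeff (q - (m + 2) - a * j)
      else 0 := by
  have h := congrArg (PowerSeries.coeff (R := ℤ) (q - (m + 2) + (m + 1)))
    (X_pow_mul_mk_card_spacedTuples ℤ m ha)
  have hleft : PowerSeries.coeff (R := ℤ) (q - (m + 2) + (m + 1)) (PowerSeries.X ^ a *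
      PowerSeries.mk fun L => (#(spacedTuples (m + 1) 1 a L) : ℤ)) =
      #(spacedTuples (m + 1) 1 a (q - (a + 1))) := by
    rw [show q - (m + 2) + (m + 1) = q - 1 by omega, PowerSeries.coeff_X_pow_mul',
      PowerSeries.coeff_mk]
    split_ifs with haq
    · rw [Nat.sub_sub, add_comm 1 a]
    · rw [Nat.sub_eq_zero_of_le (by omega), card_spacedTuples_succ_zero, Nat.cast_zero]
  rw [hleft, PowerSeries.coeff_X_pow_mul, coeff_mul_expand _ _ _ (show _ < q by omega)] at h
  simp only [PowerSeries.coeff_mk, coeff_geom_sum_pow] at h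
  exact_mod_cast h

end GeneratingFunctions

section Avoidance

open Finset

variable {q : ℕ}

lemma N_A_succ (m : ℕ) (u v : ℤ) :
    N_A (m + 1) q u v = q * Set.ncard {y : Fin m → ZMod q |
      (∀ i, Avoids (y i) u v) ∧ ∀ i j, i < j → Avoids (y i - y j) u v} := by
  let rotate : ZMod q × (Fin m → ZMod q) → Fin (m + 1) → ZMod q :=
    fun p => Fin.snoc (fun i => p.2 i + p.1) p.1
  have hinj : rotate.Injective := by
    rintro ⟨t, y⟩ ⟨t', y'⟩ h
    obtain ⟨hy, rfl⟩ := Fin.snoc_inj.1 h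
    exact Prod.ext rfl (funext fun i => add_right_cancel (congrFun hy i))
  have hsurj : rotate.Surjective := fun x =>
    ⟨(x (Fin.last m), fun i => x i.castSucc - x (Fin.last m)), by
      simp only [rotate, sub_add_cancel]
      exact Fin.snoc_init_self x⟩
  have hpre : rotate ⁻¹' {x | ∀ i j, i < j → Avoids (x i - x j) u v} =
      Set.univ ×ˢ {y | (∀ i, Avoids (y i) u v) ∧ ∀ i j, i < j → Avoids (y i - y j) u v} := by
    ext ⟨t, y⟩
    simp [rotate, Fin.forall_fin_succ', forall_and, and_comm, Fin.castSucc_lt_last,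
      Fin.not_lt.2 (Fin.le_last _)]
  rw [N_A, ← Set.image_preimage_eq {x | ∀ i j, i < j → Avoids (x i - x j) u v} hsurj, hpre,
    Set.ncard_image_of_injective _ hinj, Set.ncard_prod, Set.ncard_univ, Nat.card_zmod]

variable [NeZero q]

lemma avoids_zero_iff {x : ZMod q} {a : ℕ} : Avoids x 0 a ↔ a < x.val := by
  constructor
  · intro hx
    by_contra! hle
    exact hx x.val (Int.natCast_nonneg _) (by exact_mod_cast hle) (by simp)
  · rintro hx k hk hka rfl
    lift k to ℕ using hk
    rw [Int.cast_natCast, ZMod.val_natCast] at hx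
    have := Nat.mod_le k q
    omega

/-- Since `a < x.val`, a difference that wraps around the circle exceeds `a`. -/
lemma avoids_sub_zero_iff {x y : ZMod q} {a : ℕ} (hx : a < x.val) :
    Avoids (x - y) 0 a ↔ x.val + 1 ≤ y.val ∨ y.val + 1 + a ≤ x.val := by
  rw [avoids_zero_iff]
  have := y.val_lt
  have := (x - y).val_lt
  rcases lt_or_ge ((x - y).val + y.val) q with h | h
  · have := ZMod.val_add_of_lt h
    rw [sub_add_cancel] at this
    omega
  · have := ZMod.val_add_val_of_le h
    rw [sub_add_cancel] at this
    omega

lemma ncard_isSpaced_val (m k b a : ℕ) :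
    Set.ncard {y : Fin m → ZMod q | (∀ i, k ≤ (y i).val) ∧ IsSpaced b a fun i => (y i).val} =
      #(spacedTuples m b a (q - k)) := by
  rw [← Set.ncard_coe_finset]
  refine Set.ncard_congr (fun y _ i => (y i).val - k) ?_ ?_ ?_
  · rintro y ⟨hy, hspaced⟩
    refine mem_spacedTuples.2 ⟨fun i => ?_, fun i j hij => ?_⟩
    · have := hy i
      have := (y i).val_lt
      omega
    · have := hy i
      have := hy j
      have := hspaced i j hij
      dsimp only at this ⊢
      omega
  · rintro y y' ⟨hy, -⟩ ⟨hy', -⟩ h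
    refine funext fun i => ZMod.val_injective q ?_
    have := hy i
    have := hy' i
    have := congrFun h i
    omega
  · intro z hz
    obtain ⟨hlt, hspaced⟩ := mem_spacedTuples.1 hz
    have hval (i : Fin m) : ((z i + k : ℕ) : ZMod q).val = z i + k :=
      ZMod.val_natCast_of_lt (by have := hlt i; omega)
    refine ⟨fun i => ((z i + k : ℕ) : ZMod q), ⟨fun i => ?_, fun i j hij => ?_⟩, ?_⟩
    · rw [hval]
      omega
    · have := hspaced i j hij
      simp only [hval]
      omega
    · simp only [hval, Nat.add_sub_cancel]

lemma N_A_succ_zero (m a : ℕ) :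
    N_A (m + 1) q 0 a = q * #(spacedTuples m 1 a (q - (a + 1))) := by
  have hset : {y : Fin m → ZMod q |
        (∀ i, Avoids (y i) 0 a) ∧ ∀ i j, i < j → Avoids (y i - y j) 0 a} =
      {y | (∀ i, a + 1 ≤ (y i).val) ∧ IsSpaced 1 a fun i => (y i).val} :=
    Set.ext fun y => (and_congr_left' (forall_congr' fun i => avoids_zero_iff)).trans
      (and_congr_right fun hy => forall₃_congr fun i j _ => avoids_sub_zero_iff (hy i))
  rw [N_A_succ, hset, ncard_isSpaced_val]

end Avoidance

theorem statement1_general (n a : ℕ) (hn : 2 ≤ n) (ha : 1 ≤ a)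
    (c : ℕ → ℕ)
    (hc : ∀ k, c k = (((∑ j ∈ Finset.range a, (X : Polynomial ℕ) ^ j)) ^ n).coeff k)
    (q : ℕ) (hq : n ≤ q) :
    N_A n q 0 (a : ℤ) =
      q * ∑ j ∈ Finset.range q,
        (if a * j ≤ q - n then j ^ (n - 1) * c (q - n - a * j) else 0) := by
  obtain ⟨m, rfl⟩ : ∃ m, n = m + 2 := Nat.exists_eq_add_of_le' hn
  have : NeZero q := ⟨by omega⟩
  rw [N_A_succ_zero, card_spacedTuples_eq_sum_coeff m (Nat.one_le_iff_ne_zero.1 ha) hq]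
  simp only [hc, Nat.add_succ_sub_one]

/-- Proposition 3.1. For `q > an`,
`N_A(n,q,0,a) = q ⬝ ∑_{j ≥ 0, aj ≤ q-n} j^(n-1) c_(q-n-aj)`, where the `c_k` are the
coefficients of `(1 + y + ... + y^(a-1))^n`. -/
theorem statement1 (n a : ℕ) (hn : 2 ≤ n) (ha : 1 ≤ a)
    (c : ℕ → ℕ)
    (hc : ∀ k, c k = (((∑ j ∈ Finset.range a, (X : Polynomial ℕ) ^ j)) ^ n).coeff k)
    (q : ℕ) (hq : a * n < q) :
    N_A n q 0 (a : ℤ) =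
      q * ∑ j ∈ Finset.range q,
        (if a * j ≤ q - n then j ^ (n - 1) * c (q - n - a * j) else 0) :=
  statement1_general n a hn ha c hc q ((Nat.le_mul_of_pos_left n ha).trans hq.le)
end

section
/- Let n \ge 2 and a \ge 1 be integers. Then for every integer q > an, (q-n) \cdot N_A(n,q,0,a) = q \cdot N_A(n,q-n,1,a-1). (For a = 1 the avoidance condition on the right-hand side is vacuous, so N_A(n,q-n,1,0) = (q-n)^n.) -/
open Polynomial

/-!
Rotating all entries simultaneously, we may assume that the first entry is `0`; this costs a
factor `q` on the left and `q - n` on the right. The tuples with first entry `0` counted on the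
left are the placements of `n` labelled tokens in distinct cells of a line of `q` cells. A token
may be followed, further along the line, by a token of smaller label only after more than `a`
steps, and cyclically this also holds for every token and the copy in cell `q` of the first token.
Deleting the `n` occupied cells turns such a placement into one on `q - n` cells, where several
tokens may share a position and the previous gaps are now at least `a`. Sorting the tokens that
share a position by label recovers the placement, so both numbers of normalized tuples agree.
-/

section Residues

variable {q : ℕ} [NeZero q]

lemma val_sub_eq_ite (s t : ZMod q) :
    (s - t).val = if t.val ≤ s.val then s.val - t.val else s.val + q - t.val := by
  split_ifs with h
  · exact ZMod.val_sub h
  · have hne : t - s ≠ 0 := fun h0 => h (sub_eq_zero.1 h0 ▸ le_rfl)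
    rw [← neg_sub t s, ZMod.neg_val, if_neg hne, ZMod.val_sub (by omega)]
    have := t.val_lt
    omega

lemma avoids_zero_iff_lt_val (x : ZMod q) (a : ℕ) : Avoids x 0 a ↔ a < x.val := by
  constructor
  · intro h
    by_contra! hle
    exact h x.val (by omega) (by omega) (by simp)
  · rintro h k hk0 hka rfl
    lift k to ℕ using hk0
    have := Nat.mod_le k q
    rw [Int.cast_natCast, ZMod.val_natCast] at h
    omega

/- The least positive representative of `x` is `q - (-x).val`; unlike `x.val`, it is correct at
`x = 0` as well. -/
lemma avoids_one_iff_val_neg_add_le (x : ZMod q) (a : ℕ) :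
    Avoids x 1 ((a : ℤ) - 1) ↔ (-x).val + a ≤ q := by
  have hlt := (-x).val_lt
  constructor
  · intro h
    by_contra! hgt
    exact h (q - (-x).val) (by omega) (by omega) (by simp)
  · rintro h k hk1 hka rfl
    lift k to ℕ using by omega
    have hval : (-((k : ℤ) : ZMod q)).val = q - k := by
      rw [← ZMod.val_natCast_of_lt (show q - k < q by omega), Nat.cast_sub (by omega)]
      simp
    omega

end Residues

section Normalization

lemma ncard_eq_card_mul_ncard_of_add_const_mem_iff {ι G : Type*} [AddGroup G] (S : Set (ι → G))
    (hS : ∀ (g : G) (x : ι → G), (fun j => x j + g) ∈ S ↔ x ∈ S) (i : ι) :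
    S.ncard = Nat.card G * {x ∈ S | x i = 0}.ncard := by
  let e : S ≃ G × {x ∈ S | x i = 0} :=
    { toFun x := (x.1 i, ⟨fun j => x.1 j + -x.1 i, (hS _ _).2 x.2, add_neg_cancel _⟩)
      invFun y := ⟨fun j => y.2.1 j + y.1, (hS _ _).2 y.2.2.1⟩
      left_inv x := by simp
      right_inv y := by
        ext
        · simp [y.2.2.2]
        · simp [y.2.2.2] }
  simpa only [Nat.card_prod, Nat.card_coe_set_eq] using Nat.card_congr e

lemma N_A_eq_mul_ncard (n q : ℕ) [NeZero n] (u v : ℤ) :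
    N_A n q u v = q * {x : Fin n → ZMod q |
      x ⊥ = 0 ∧ ∀ i j : Fin n, i < j → Avoids (x i - x j) u v}.ncard := by
  rw [N_A, ncard_eq_card_mul_ncard_of_add_const_mem_iff _ (by simp) ⊥, Nat.card_zmod]
  simp only [Set.mem_ofPred_eq, and_comm]

lemma ncard_setOf_val_mem {ι : Type*} {q : ℕ} [NeZero q] {T : Set (ι → ℕ)}
    (hT : ∀ x ∈ T, ∀ i, x i < q) :
    {x : ι → ZMod q | (fun i => (x i).val) ∈ T}.ncard = T.ncard := by
  refine Set.ncard_preimage_of_injective_subset_range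
    (fun x y h => funext fun i => ZMod.val_injective q (congrFun h i)) fun x hx => ?_
  exact ⟨fun i => x i, funext fun i => ZMod.val_natCast_of_lt (hT x hx i)⟩

end Normalization

section Spacing

variable {ι : Type*} [LinearOrder ι]

/-- Each inversion of `x` has size more than `a`, and no two entries are equal: the pairwise
condition on representatives that comes from avoiding `[0, a]`. -/
def StrictlySpaced (a : ℕ) (x : ι → ℕ) : Prop :=
  ∀ ⦃i j⦄, i < j → x i < x j ∨ x j + a < x i

/-- Each inversion of `y` has size at least `a`, equal entries being allowed: the pairwise
condition on representatives that comes from avoiding `[1, a - 1]`. -/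
def WeaklySpaced (a : ℕ) (y : ι → ℕ) : Prop :=
  ∀ ⦃i j⦄, i < j → y i ≤ y j ∨ y j + a ≤ y i

lemma StrictlySpaced.injective {a : ℕ} {x : ι → ℕ} (hx : StrictlySpaced a x) :
    Function.Injective x := by
  intro i j hij
  by_contra hne
  rcases lt_or_gt_of_ne hne with h | h <;> have := hx h <;> omega

variable (ι) in
/-- For `q > 0`, the representatives in `[0, q)` of the tuples over `ZMod q` that start
with `0` and whose differences avoid `[0, a]`. The upper bound is the spacing condition across the
boundary, between an entry and the `0` of the next period. -/
def strictTuples [OrderBot ι] (q a : ℕ) : Set (ι → ℕ) :=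
  {x | x ⊥ = 0 ∧ (∀ i ≠ ⊥, x i + a < q) ∧ StrictlySpaced a x}

variable (ι) in
/-- For `p > 0` and `a > 0`, the representatives in `[0, p)` of the tuples over `ZMod p` that start
with `0` and whose differences avoid `[1, a - 1]`. -/
def weakTuples [OrderBot ι] (p a : ℕ) : Set (ι → ℕ) :=
  {y | y ⊥ = 0 ∧ (∀ i ≠ ⊥, y i + a ≤ p) ∧ WeaklySpaced a y}

variable [OrderBot ι] {q : ℕ} [NeZero q]

lemma val_mem_strictTuples_iff (a : ℕ) (x : ι → ZMod q) :
    (fun i => (x i).val) ∈ strictTuples ι q a ↔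
      x ⊥ = 0 ∧ ∀ i j, i < j → Avoids (x i - x j) 0 a := by
  simp only [strictTuples, Set.mem_ofPred_eq, ZMod.val_eq_zero, avoids_zero_iff_lt_val,
    val_sub_eq_ite]
  refine and_congr_right fun h0 => ⟨fun ⟨hbound, hx⟩ i j hij => ?_, fun h => ⟨fun i hi => ?_, ?_⟩⟩
  · have := hbound j hij.ne_bot
    have := hx hij
    grind
  · have := h ⊥ i (bot_lt_iff_ne_bot.2 hi)
    rw [h0, ZMod.val_zero] at this
    grind
  · intro i j hij
    have := h i j hij
    grind

lemma val_mem_weakTuples_iff (a : ℕ) (y : ι → ZMod q) :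
    (fun i => (y i).val) ∈ weakTuples ι q a ↔
      y ⊥ = 0 ∧ ∀ i j, i < j → Avoids (y i - y j) 1 ((a : ℤ) - 1) := by
  simp only [weakTuples, Set.mem_ofPred_eq, ZMod.val_eq_zero, avoids_one_iff_val_neg_add_le,
    neg_sub, val_sub_eq_ite]
  refine and_congr_right fun h0 => ⟨fun ⟨hbound, hy⟩ i j hij => ?_, fun h => ⟨fun i hi => ?_, ?_⟩⟩
  · have := hbound j hij.ne_bot
    have := hy hij
    grind
  · have := h ⊥ i (bot_lt_iff_ne_bot.2 hi)
    rw [h0, ZMod.val_zero] at this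
    grind
  · intro i j hij
    have := h i j hij
    grind

end Spacing

lemma N_A_zero_eq_mul_ncard_strictTuples (n q a : ℕ) [NeZero n] [NeZero q] :
    N_A n q 0 a = q * (strictTuples (Fin n) q a).ncard := by
  have hlt : ∀ x ∈ strictTuples (Fin n) q a, ∀ i, x i < q := by
    rintro x ⟨h0, hbound, -⟩ i
    obtain rfl | hi := eq_or_ne i ⊥
    · exact h0 ▸ NeZero.pos q
    · have := hbound i hi
      omega
  simp only [N_A_eq_mul_ncard, ← ncard_setOf_val_mem hlt, val_mem_strictTuples_iff]

lemma N_A_one_eq_mul_ncard_weakTuples (n p : ℕ) {a : ℕ} (ha : 1 ≤ a) [NeZero n] [NeZero p] :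
    N_A n p 1 ((a : ℤ) - 1) = p * (weakTuples (Fin n) p a).ncard := by
  have hlt : ∀ y ∈ weakTuples (Fin n) p a, ∀ i, y i < p := by
    rintro y ⟨h0, hbound, -⟩ i
    obtain rfl | hi := eq_or_ne i ⊥
    · exact h0 ▸ NeZero.pos p
    · have := hbound i hi
      omega
  simp only [N_A_eq_mul_ncard, ← ncard_setOf_val_mem hlt, val_mem_weakTuples_iff]

section OrderRank

variable {ι α β : Type*} [Fintype ι] [Preorder α] [DecidableLT α] [LinearOrder β]

/-- The rank of `f i` among the values of `f`: the number of indices with a smaller value. -/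
def orderRank (f : ι → α) (i : ι) : ℕ :=
  Finset.card {k | f k < f i}

lemma orderRank_lt_orderRank {f : ι → α} {i j : ι} (h : f i < f j) :
    orderRank f i < orderRank f j := by
  refine Finset.card_lt_card (Finset.ssubset_iff_of_subset ?_ |>.2 ⟨i, by simpa, by simp⟩)
  intro k hk
  simp only [Finset.mem_filter_univ] at hk ⊢
  exact hk.trans h

lemma orderRank_lt_card (f : ι → α) (i : ι) : orderRank f i < Fintype.card ι :=
  Finset.card_lt_univ_of_notMem (x := i) (by simp)

lemma orderRank_congr {f : ι → α} {g : ι → β} (hg : Function.Injective g)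
    (h : ∀ i j, g i < g j → f i < f j) : orderRank f = orderRank g := by
  have hiff (i j : ι) : f i < f j ↔ g i < g j := by
    refine ⟨fun hf => ?_, h i j⟩
    have hne : g i ≠ g j := fun e => hf.ne (congrArg f (hg e))
    exact hne.lt_or_gt.resolve_right fun hgt => hf.asymm (h j i hgt)
  funext i
  simp only [orderRank, hiff]

end OrderRank

section LexKey

variable {ι : Type*}

/-- The key of the tie-breaking order: tokens are sorted by position, then by label. -/
def lexKey (y : ι → ℕ) (i : ι) : ℕ ×ₗ ι :=
  toLex (y i, i)

lemma lexKey_lt_iff [LinearOrder ι] {y : ι → ℕ} {i j : ι} :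
    lexKey y i < lexKey y j ↔ y i < y j ∨ y i = y j ∧ i < j :=
  Prod.Lex.toLex_lt_toLex

lemma lexKey_injective (y : ι → ℕ) : Function.Injective (lexKey y) :=
  fun _ _ h => congrArg (fun k => (ofLex k).2) h

end LexKey

section FreeCells

variable {ι : Type*} [Fintype ι]

/-- The number of cells below `c` that are not occupied by a token of the placement `x`. -/
def freeBelow (x : ι → ℕ) (c : ℕ) : ℕ :=
  Nat.count (fun d => ∀ k, x k ≠ d) c

lemma freeBelow_mono (x : ι → ℕ) : Monotone (freeBelow x) :=
  Nat.count_monotone _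

lemma freeBelow_add_of_forall_ne {x : ι → ℕ} {c a : ℕ} (h : ∀ d < a, ∀ k, x k ≠ c + d) :
    freeBelow x (c + a) = freeBelow x c + a := by
  rw [freeBelow, Nat.count_add, Nat.count_of_forall h, freeBelow]

lemma freeBelow_add_card_lt {x : ι → ℕ} (hx : Function.Injective x) (c : ℕ) :
    freeBelow x c + Finset.card {k | x k < c} = c := by
  have himage : ({d ∈ Finset.range c | ¬∀ k, x k ≠ d} : Finset ℕ) =
      ({k | x k < c} : Finset ι).image x := by
    ext d
    simp only [Finset.mem_filter, Finset.mem_range, Finset.mem_image, Finset.mem_univ, true_and]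
    grind
  rw [freeBelow, Nat.count_eq_card_filter_range, ← Finset.card_image_of_injective _ hx, ← himage,
    Finset.card_filter_add_card_filter_not, Finset.card_range]

end FreeCells

section DeleteInsertCells

variable {ι : Type*} [Fintype ι] {a : ℕ} {x y : ι → ℕ}

/-- The positions of the tokens of `x` after all occupied cells have been deleted. -/
def deleteCells (x : ι → ℕ) (i : ι) : ℕ :=
  freeBelow x (x i)

lemma deleteCells_add_orderRank (hx : Function.Injective x) (i : ι) :
    deleteCells x i + orderRank x i = x i :=
  freeBelow_add_card_lt hx (x i)

lemma deleteCells_le_deleteCells {i j : ι} (h : x i ≤ x j) : deleteCells x i ≤ deleteCells x j :=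
  freeBelow_mono x h

lemma deleteCells_add_le_of_forall_add_lt {p : ℕ} (hx : Function.Injective x)
    (hbound : ∀ k, x k + a < p + Fintype.card ι) (i : ι) : deleteCells x i + a ≤ p := by
  have hi := hbound i
  obtain ⟨c, hc⟩ := Nat.exists_eq_add_of_le' (show a ≤ p + Fintype.card ι by omega)
  have hall : ({k | x k < c + a} : Finset ι) = Finset.univ := by grind
  have htotal := freeBelow_add_card_lt hx (c + a)
  rw [hall, Finset.card_univ, freeBelow_add_of_forall_ne (by grind)] at htotal
  have := freeBelow_mono x (show x i ≤ c by omega)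
  rw [deleteCells]
  omega

variable [LinearOrder ι]

/-- The placement obtained from `y` by inserting a new cell for each token, tokens in the same
position being sorted by label; this inverts `deleteCells`. -/
def insertCells (y : ι → ℕ) (i : ι) : ℕ :=
  y i + orderRank (lexKey y) i

lemma insertCells_lt_insertCells {i j : ι} (h : lexKey y i < lexKey y j) :
    insertCells y i < insertCells y j := by
  have := orderRank_lt_orderRank h
  have := lexKey_lt_iff.1 h
  grind [insertCells]

lemma WeaklySpaced.strictlySpaced_insertCells (hy : WeaklySpaced a y) (ha : 1 ≤ a) :
    StrictlySpaced a (insertCells y) := by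
  intro i j hij
  obtain hle | hgap := hy hij
  · exact Or.inl (insertCells_lt_insertCells (lexKey_lt_iff.2 (by grind)))
  · have := orderRank_lt_orderRank (lexKey_lt_iff.2 (Or.inl (by omega)) : lexKey y j < lexKey y i)
    grind [insertCells]

/- Among the tokens of label above `i` and position below `x i`, let `k` be the last one. A token
in one of the `a` cells after `x k` would have label at most `i`, contradicting the spacing between
it and `k`; so these `a` cells are free. -/
lemma StrictlySpaced.deleteCells_add_le (hx : StrictlySpaced a x) {i j : ι} (hij : i < j)
    (hji : x j < x i) : deleteCells x j + a ≤ deleteCells x i := by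
  obtain ⟨k, hk, hmax⟩ := Finset.exists_max_image {k | i < k ∧ x k < x i} x ⟨j, by simp [hij, hji]⟩
  simp only [Finset.mem_filter_univ] at hk hmax
  have hgap : x k + a < x i := (hx hk.1).resolve_left hk.2.not_gt
  have hfree : ∀ d < a, ∀ l, x l ≠ x k + 1 + d := by
    intro d hd l hl
    have hli : l ≤ i := by
      by_contra! hil
      have := hmax l ⟨hil, by omega⟩
      omega
    have := hx (hli.trans_lt hk.1)
    omega
  calc freeBelow x (x j) + a
      ≤ freeBelow x (x k + 1) + a := by
        gcongr
        exact freeBelow_mono x ((hmax j ⟨hij, hji⟩).trans (Nat.le_succ _))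
    _ = freeBelow x (x k + 1 + a) := (freeBelow_add_of_forall_ne hfree).symm
    _ ≤ freeBelow x (x i) := freeBelow_mono x (by omega)

lemma StrictlySpaced.weaklySpaced_deleteCells (hx : StrictlySpaced a x) :
    WeaklySpaced a (deleteCells x) := by
  intro i j hij
  exact (hx hij).imp (fun h => deleteCells_le_deleteCells h.le)
    fun h => hx.deleteCells_add_le hij (by omega)

lemma StrictlySpaced.lexKey_deleteCells_lt (hx : StrictlySpaced a x) (ha : 1 ≤ a) {i j : ι}
    (h : x i < x j) : lexKey (deleteCells x) i < lexKey (deleteCells x) j := by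
  rw [lexKey_lt_iff]
  have hle := deleteCells_le_deleteCells h.le
  rcases lt_trichotomy i j with hij | rfl | hji
  · exact hle.lt_or_eq.imp_right fun heq => ⟨heq, hij⟩
  · exact absurd h (lt_irrefl _)
  · have := hx.deleteCells_add_le hji h
    omega

lemma StrictlySpaced.insertCells_deleteCells (hx : StrictlySpaced a x) (ha : 1 ≤ a) :
    insertCells (deleteCells x) = x := by
  funext i
  rw [insertCells, orderRank_congr hx.injective fun _ _ => hx.lexKey_deleteCells_lt ha,
    deleteCells_add_orderRank hx.injective]

lemma WeaklySpaced.deleteCells_insertCells (hy : WeaklySpaced a y) (ha : 1 ≤ a) :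
    deleteCells (insertCells y) = y := by
  have hrank : orderRank (insertCells y) = orderRank (lexKey y) :=
    orderRank_congr (lexKey_injective y) fun _ _ => insertCells_lt_insertCells
  funext i
  have h := deleteCells_add_orderRank (hy.strictlySpaced_insertCells ha).injective i
  rw [hrank] at h
  exact Nat.add_right_cancel h

variable [OrderBot ι] {p : ℕ}

lemma mapsTo_deleteCells : Set.MapsTo deleteCells
    (strictTuples ι (p + Fintype.card ι) a) (weakTuples ι p a) := by
  rintro x ⟨h0, hbound, hx⟩
  refine ⟨by simp [deleteCells, h0, freeBelow], fun i hi => ?_, hx.weaklySpaced_deleteCells⟩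
  refine deleteCells_add_le_of_forall_add_lt hx.injective (fun k => ?_) i
  obtain rfl | hk := eq_or_ne k ⊥
  · have := hbound i hi
    omega
  · exact hbound k hk

lemma mapsTo_insertCells (ha : 1 ≤ a) : Set.MapsTo insertCells
    (weakTuples ι p a) (strictTuples ι (p + Fintype.card ι) a) := by
  rintro y ⟨h0, hbound, hy⟩
  refine ⟨by simp [insertCells, orderRank, lexKey_lt_iff, h0], fun i hi => ?_,
    hy.strictlySpaced_insertCells ha⟩
  have := hbound i hi
  have := orderRank_lt_card (lexKey y) i
  rw [insertCells]
  omega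

lemma ncard_strictTuples_add_card (ha : 1 ≤ a) :
    (strictTuples ι (p + Fintype.card ι) a).ncard = (weakTuples ι p a).ncard :=
  Set.BijOn.ncard_eq <| Set.InvOn.bijOn (f' := insertCells)
    ⟨fun _ hx => hx.2.2.insertCells_deleteCells ha, fun _ hy => hy.2.2.deleteCells_insertCells ha⟩
    mapsTo_deleteCells (mapsTo_insertCells ha)

end DeleteInsertCells

theorem statement3_general (n a : ℕ) (ha : 1 ≤ a) (q : ℕ) (hq : n < q) :
    (q - n) * N_A n q 0 (a : ℤ) = q * N_A n (q - n) 1 ((a : ℤ) - 1) := by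
  obtain rfl | hn := eq_or_ne n 0
  · simp [N_A]
  obtain ⟨p, rfl⟩ := Nat.exists_eq_add_of_le' hq.le
  have : NeZero n := ⟨hn⟩
  have : NeZero p := ⟨by omega⟩
  have hcard := ncard_strictTuples_add_card (ι := Fin n) (p := p) ha
  rw [Fintype.card_fin] at hcard
  rw [Nat.add_sub_cancel, N_A_zero_eq_mul_ncard_strictTuples,
    N_A_one_eq_mul_ncard_weakTuples n p ha, hcard]
  ring

/-- Proposition 3.3. For `q > an`,
`(q-n) ⬝ N_A(n,q,0,a) = q ⬝ N_A(n,q-n,1,a-1)`. -/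
theorem statement3 (n a : ℕ) (hn : 2 ≤ n) (ha : 1 ≤ a)
    (q : ℕ) (hq : a * n < q) :
    (q - n) * N_A n q 0 (a : ℤ) = q * N_A n (q - n) 1 ((a : ℤ) - 1) :=
  statement3_general n a ha q ((Nat.le_mul_of_pos_left n ha).trans_lt hq)
end

section
/- Let n \ge 2 and a \ge 1 be integers and write (1 + y + y^2 + ... + y^a)^n = \sum_{k=0}^{na} c_k y^k. Then for every integer q > (a+1)n, (a+1)^n \cdot N_A(n,q,1,a) = q \cdot \sum_{k=0}^{na} c_k \, (q-k)^{n-1} (an identity of rational numbers). -/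
open Polynomial

/-!
By translation, `N_A n q 1 a` is `q` times the number of avoiding tuples whose first entry is `0`.
Put `b = a + 1` and read such a tuple around the circle `ZMod q`, starting from its first entry:
avoiding `1, ..., a` means that the gap after an index followed by a smaller one is at least `b`.
Write the gaps as `e + b * g` with `0 ≤ e < b`. Then a gap is at least `b` exactly when its quotient
`g` is positive, so `g` is the gap word of an arbitrary tuple, with first entry `0`, on a circle of
length `m = (q - ∑ i, e i) / b`, and each admissible `e` accounts for `m ^ (n - 1)` tuples.

The remaining constraint is `∑ i, e i ≡ q` modulo `b`. Summed over all `e` with a prescribed residue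
of `∑ i, e i`, a polynomial of degree less than `n` in `∑ i, e i` gives a value independent of that
residue. So dropping the constraint multiplies the sum by `b`, and in the unconstrained sum of
`(q - ∑ i, e i) ^ (n - 1)` the value `∑ i, e i = k` occurs `c k` times.
-/

section Equidistribution

variable {R : Type*} [CommRing R]

lemma degree_taylor_sub_self_lt {P : R[X]} {n : ℕ} (hP : P.degree < (n + 1 : ℕ)) (t : R) :
    (taylor t P - P).degree < n := by
  by_cases h0 : P = 0
  · simp [h0]
  have hlt : (taylor t P - P).degree < (taylor t P).degree :=
    degree_sub_lt_left (degree_taylor P t) (by simpa using h0) (by simp)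
  rw [degree_taylor] at hlt
  have hle : P.degree ≤ n :=
    degree_le_of_natDegree_le (Nat.lt_succ_iff.1 ((natDegree_lt_iff_degree_lt h0).2 hP))
  exact hlt.trans_le hle

lemma degree_C_sub_X_pow_lt (r : R) (n : ℕ) : ((C r - X : R[X]) ^ n).degree < (n + 1 : ℕ) := by
  have hle : (C r - X : R[X]).degree ≤ (1 : ℕ) :=
    (degree_sub_le _ _).trans (max_le (degree_C_le.trans zero_le_one) degree_X_le)
  exact (degree_pow_le_of_le n hle).trans_lt (by exact_mod_cast (by omega : n * 1 < n + 1))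

lemma sum_fun_fin_succ {ι M : Type*} [Fintype ι] [AddCommMonoid M] {n : ℕ}
    (F : (Fin (n + 1) → ι) → M) : ∑ e, F e = ∑ t, ∑ e : Fin n → ι, F (Fin.cons t e) := by
  rw [← (Fin.consEquiv fun _ ↦ ι).sum_comp, Fintype.sum_prod_type]
  rfl

variable {G : Type*} [AddCommGroup G] [Fintype G] [DecidableEq G]

-- Split off the first coordinate `t` and write `P (v t + s) = (P (v t + s) - P s) + P s`. The
-- difference has smaller degree in `s`, and in `P s` the coordinate `t` only serves to fix the sum.
theorem card_mul_sum_eval_of_sum_eq (v : G → R) {n : ℕ} {P : R[X]} (hP : P.degree < n) (r : G) :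
    Fintype.card G * ∑ e : Fin n → G with ∑ i, e i = r, P.eval (∑ i, v (e i)) =
      ∑ e : Fin n → G, P.eval (∑ i, v (e i)) := by
  induction n generalizing P r with
  | zero => simp [degree_eq_bot.1 (Nat.WithBot.lt_zero_iff.1 (by simpa using hP))]
  | succ n ih =>
    obtain ⟨Δ, degree_Δ, eval_add⟩ : ∃ Δ : G → R[X], (∀ t, (Δ t).degree < n) ∧
        ∀ t s, P.eval (v t + s) = (Δ t).eval s + P.eval s :=
      ⟨fun t ↦ taylor (v t) P - P, fun t ↦ degree_taylor_sub_self_lt hP (v t),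
        fun t s ↦ by rw [eval_sub, taylor_eval, sub_add_cancel, add_comm]⟩
    have sum_fiber (f : (Fin n → G) → R) :
        ∑ t, ∑ e : Fin n → G with ∑ i, e i = r - t, f e = ∑ e, f e := by
      simp_rw [Finset.sum_filter, eq_sub_iff_add_eq, ← eq_sub_iff_add_eq']
      rw [Finset.sum_comm]
      simp only [Finset.sum_ite_eq', Finset.mem_univ, if_true]
    calc Fintype.card G * ∑ e : Fin (n + 1) → G with ∑ i, e i = r, P.eval (∑ i, v (e i))
        = Fintype.card G * ∑ t, ∑ e : Fin n → G with ∑ i, e i = r - t,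
            ((Δ t).eval (∑ i, v (e i)) + P.eval (∑ i, v (e i))) := by
          simp only [Finset.sum_filter, sum_fun_fin_succ, Fin.sum_univ_succ, Fin.cons_zero,
            Fin.cons_succ, eval_add, eq_sub_iff_add_eq']
      _ = ∑ t, Fintype.card G * ∑ e : Fin n → G with ∑ i, e i = r - t,
            (Δ t).eval (∑ i, v (e i)) +
              Fintype.card G * ∑ e : Fin n → G, P.eval (∑ i, v (e i)) := by
          simp only [Finset.sum_add_distrib, sum_fiber, mul_add, Finset.mul_sum]
      _ = ∑ t, ∑ e : Fin n → G, ((Δ t).eval (∑ i, v (e i)) + P.eval (∑ i, v (e i))) := by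
          simp only [ih (degree_Δ _), Finset.sum_add_distrib, Finset.sum_const,
            Finset.card_univ, nsmul_eq_mul]
      _ = ∑ e : Fin (n + 1) → G, P.eval (∑ i, v (e i)) := by
          simp only [sum_fun_fin_succ, Fin.sum_univ_succ, Fin.cons_zero, Fin.cons_succ, eval_add]

end Equidistribution

section Coefficients

lemma sum_range_coeff_sum_X_pow_mul {ι R : Type*} [CommSemiring R] (s : Finset ι) (f : ι → ℕ)
    {d : ℕ} (hf : ∀ i ∈ s, f i < d) (F : ℕ → R) :
    ∑ k ∈ Finset.range d, ((∑ i ∈ s, (X : ℕ[X]) ^ f i).coeff k : R) * F k =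
      ∑ i ∈ s, F (f i) := by
  simp only [finsetSum_coeff, coeff_X_pow, Nat.cast_sum, Nat.cast_ite, Nat.cast_one, Nat.cast_zero,
    Finset.sum_mul, ite_mul, one_mul, zero_mul]
  rw [Finset.sum_comm]
  refine Finset.sum_congr rfl fun i hi ↦ ?_
  rw [Finset.sum_ite_eq', if_pos (Finset.mem_range.2 (hf i hi))]

lemma geom_sum_pow_eq_sum_zmod {R : Type*} [CommSemiring R] (x : R) (a n : ℕ) :
    (∑ j ∈ Finset.range (a + 1), x ^ j) ^ n =
      ∑ e : Fin n → ZMod (a + 1), x ^ ∑ i, (e i).val := by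
  have geom_sum : ∑ j ∈ Finset.range (a + 1), x ^ j = ∑ t : ZMod (a + 1), x ^ t.val :=
    Finset.sum_range _
  simp only [geom_sum, Fintype.sum_pow, Finset.prod_pow_eq_pow_sum]

lemma sum_zmod_val_le {n a : ℕ} (e : Fin n → ZMod (a + 1)) : ∑ i, (e i).val ≤ n * a := by
  simpa using Finset.sum_le_card_nsmul Finset.univ (fun i ↦ (e i).val) a
    fun i _ ↦ Nat.lt_succ_iff.1 (e i).val_lt

end Coefficients

section Avoiding

theorem N_A_succ_eq_mul (N q : ℕ) (u v : ℤ) :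
    N_A (N + 1) q u v = q * Nat.card {y : Fin (N + 1) → ZMod q //
      y 0 = 0 ∧ ∀ i j, i < j → Avoids (y i - y j) u v} := by
  let translate : {x : Fin (N + 1) → ZMod q // ∀ i j, i < j → Avoids (x i - x j) u v} ≃
      ZMod q × {y : Fin (N + 1) → ZMod q // y 0 = 0 ∧ ∀ i j, i < j → Avoids (y i - y j) u v} :=
    { toFun x := (x.1 0, ⟨fun i ↦ x.1 i - x.1 0, sub_self _, by simpa using x.2⟩)
      invFun w := ⟨fun i ↦ w.1 + w.2.1 i, by simpa using w.2.2.2⟩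
      left_inv x := by simp
      right_inv w := by ext <;> simp [w.2.2.1] }
  rw [N_A, ← Nat.card_coe_set_eq, Set.coe_ofPred, Nat.card_congr translate, Nat.card_prod,
    Nat.card_zmod]

variable {q a : ℕ}

lemma avoids_one_iff [NeZero q] (h : a < q) (x : ZMod q) :
    Avoids x 1 a ↔ x.val = 0 ∨ a < x.val := by
  refine ⟨fun hx ↦ ?_, fun hx k hk hka hxk ↦ ?_⟩
  · by_contra!
    exact hx x.val (by omega) (by omega) (by simp)
  · lift k to ℕ using by omega
    rw [hxk, Int.cast_natCast, ZMod.val_natCast_of_lt (by omega)] at hx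
    omega

lemma avoids_sub_iff [NeZero q] (h : a < q) (x y : ZMod q) :
    Avoids (x - y) 1 a ↔ (y.val < x.val → y.val + a < x.val) ∧
      (x.val < y.val → y.val + a < x.val + q) := by
  rw [avoids_one_iff h]
  have := x.val_lt
  have := y.val_lt
  rcases le_or_gt y.val x.val with hle | hlt
  · rw [ZMod.val_sub hle]
    omega
  · have hne : NeZero (y - x) := ⟨sub_ne_zero.2 fun hyx ↦ hlt.ne' (congrArg ZMod.val hyx)⟩
    rw [← neg_sub, ZMod.val_neg_of_ne_zero, ZMod.val_sub hlt.le]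
    omega

end Avoiding

section Spaced

/-- Representatives in `[0, q)` of an avoiding tuple over `ZMod q` whose first entry is `0`, where
the forbidden differences are `1, ..., b - 1`. Going around the circle from `0`, a position with a
larger index cannot be followed at distance less than `b` by one with a smaller index; returning
to the first entry after a full turn gives `add_le`. -/
structure IsSpaced_s4 {N : ℕ} (b q : ℕ) (x : Fin (N + 1) → ℕ) : Prop where
  zero : x 0 = 0
  add_le : ∀ j, x j + b ≤ q
  add_le_of_lt : ∀ i j, i < j → x j < x i → x j + b ≤ x i

variable {N q : ℕ}

lemma isSpaced_val_iff [NeZero q] {a : ℕ} (h : a < q) (y : Fin (N + 1) → ZMod q) :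
    IsSpaced_s4 (a + 1) q (fun i ↦ (y i).val) ↔
      y 0 = 0 ∧ ∀ i j, i < j → Avoids (y i - y j) 1 a := by
  simp only [avoids_sub_iff h]
  constructor
  · intro hy
    refine ⟨(ZMod.val_eq_zero _).1 hy.zero, fun i j hij ↦ ⟨hy.add_le_of_lt i j hij, fun _ ↦ ?_⟩⟩
    have := hy.add_le j
    omega
  · intro ⟨h0, hy⟩
    refine ⟨by simp [h0], fun j ↦ ?_, fun i j hij ↦ (hy i j hij).1⟩
    rcases (Fin.zero_le j).eq_or_lt with rfl | hj
    · simpa [h0] using h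
    · have := (hy 0 j hj).2
      simp only [h0, ZMod.val_zero] at this
      omega

theorem N_A_succ_eq_mul_card_isSpaced {a : ℕ} (h : a < q) :
    N_A (N + 1) q 1 a = q * Nat.card {x : Fin (N + 1) → ℕ // IsSpaced_s4 (a + 1) q x} := by
  have : NeZero q := ⟨by omega⟩
  rw [N_A_succ_eq_mul]
  congr 1
  have val_cast {x : Fin (N + 1) → ℕ} (hx : IsSpaced_s4 (a + 1) q x) :
      (fun i ↦ (x i : ZMod q).val) = x :=
    funext fun i ↦ ZMod.val_natCast_of_lt (by have := hx.add_le i; omega)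
  exact Nat.card_congr
    { toFun y := ⟨fun i ↦ (y.1 i).val, (isSpaced_val_iff h _).2 y.2⟩
      invFun x := ⟨fun i ↦ (x.1 i : ZMod q),
        (isSpaced_val_iff h _).1 ((val_cast x.2).symm ▸ x.2)⟩
      left_inv y := by simp
      right_inv x := Subtype.ext (val_cast x.2) }

lemma card_isSpaced_one (hq : 0 < q) :
    Nat.card {x : Fin (N + 1) → ℕ // IsSpaced_s4 1 q x} = q ^ N := by
  rw [Nat.subtype_card (Fintype.piFinset
    (Fin.cons {0} fun _ ↦ Finset.range q : Fin (N + 1) → Finset ℕ))]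
  · simp [Fin.prod_univ_succ]
  · intro x
    simp only [Fintype.mem_piFinset, Fin.forall_fin_succ (n := N), Fin.cons_zero, Fin.cons_succ,
      Finset.mem_singleton, Finset.mem_range]
    refine ⟨fun ⟨h0, hx⟩ ↦ ⟨h0, Fin.cases (by omega) hx, fun _ _ _ h ↦ h⟩,
      fun hx ↦ ⟨hx.zero, fun i ↦ hx.add_le i.succ⟩⟩

end Spaced

section GapEncoding

/-- The cyclic word of a spaced tuple: `σ` lists the indices in the order in which they are met
around a circle of length `q`, starting at index `0`, and `d p` is the gap between the `p`-th and
the next one. The addition `p + 1` wraps around, so that the last gap ends at index `0`. -/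
structure IsGapEncoding {N : ℕ} (b q : ℕ) (σ : Equiv.Perm (Fin (N + 1)))
    (d : Fin (N + 1) → ℕ) : Prop where
  map_zero : σ 0 = 0
  sum_eq : ∑ p, d p = q
  le_of_descent : ∀ p, σ (p + 1) ≤ σ p → b ≤ d p

variable {N b q : ℕ}

/-- The tuple with cyclic word `(σ, d)`: the entry of index `i` is the sum of the gaps before the
place of `i` in `σ`. -/
def ofGaps (σ : Equiv.Perm (Fin (N + 1))) (d : Fin (N + 1) → ℕ) : Fin (N + 1) → ℕ :=
  fun i ↦ Fin.partialSum d (σ.symm i).castSucc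

/-- The entries of `x` in increasing order, followed by `q`. -/
def sortedLevels (q : ℕ) (x : Fin (N + 1) → ℕ) : Fin (N + 2) → ℕ :=
  Fin.snoc (α := fun _ ↦ ℕ) (x ∘ Tuple.sort x) q

/-- The gaps between cyclically consecutive entries of `x` on a circle of length `q`. -/
def sortedGaps (q : ℕ) (x : Fin (N + 1) → ℕ) : Fin (N + 1) → ℕ :=
  fun p ↦ sortedLevels q x p.succ - sortedLevels q x p.castSucc

lemma monotone_partialSum {n : ℕ} (d : Fin n → ℕ) : Monotone (Fin.partialSum d) :=
  Fin.monotone_iff_le_succ.2 fun i ↦ by simp [Fin.partialSum_succ]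

lemma partialSum_last {M : Type*} [AddCommMonoid M] {n : ℕ} (d : Fin n → M) :
    Fin.partialSum d (Fin.last n) = ∑ i, d i := by
  rw [Fin.partialSum, Fin.val_last, List.take_of_length_le (by simp), List.sum_ofFn]

lemma partialSum_succ_sub_castSucc {n : ℕ} {y : Fin (n + 1) → ℕ} (hy : Monotone y)
    (h0 : y 0 = 0) : Fin.partialSum (fun i ↦ y i.succ - y i.castSucc) = y := by
  funext i
  induction i using Fin.induction with
  | zero => rw [Fin.partialSum_zero, h0]
  | succ i ih =>
    rw [Fin.partialSum_succ, ih, Nat.add_sub_cancel' (hy i.castSucc_le_succ)]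

lemma sort_zero_eq_zero {α : Type*} [LinearOrder α] {x : Fin (N + 1) → α} (h : ∀ i, x 0 ≤ x i) :
    Tuple.sort x 0 = 0 := by
  by_contra hne
  have hpos : 0 < (Tuple.sort x).symm 0 :=
    Fin.pos_of_ne_zero fun h0 ↦ hne ((Equiv.symm_apply_eq _).1 h0).symm
  have hle : x (Tuple.sort x 0) ≤ x 0 := by simpa using Tuple.monotone_sort x hpos.le
  have hlt := (Tuple.eq_sort_iff.1 rfl).2 _ _ hpos
    (show x (Tuple.sort x 0) = _ by simpa using hle.antisymm (h _))
  simp at hlt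

namespace IsGapEncoding

variable {σ : Equiv.Perm (Fin (N + 1))} {d : Fin (N + 1) → ℕ}

-- All gaps between the places `p` and `p'` are less than `b`, so there is no descent among them.
lemma lt_of_partialSum_lt (h : IsGapEncoding b q σ d) {p p' : Fin (N + 1)} (hp : p < p')
    (hlt : Fin.partialSum d p'.castSucc < Fin.partialSum d p.castSucc + b) : σ p < σ p' := by
  induction p' using Fin.induction with
  | zero => exact absurd hp (Fin.not_lt_zero p)
  | succ k ih =>
    have hpk : p ≤ k.castSucc := Fin.le_castSucc_iff.2 hp
    have hmono : Fin.partialSum d p.castSucc ≤ Fin.partialSum d k.castSucc.castSucc :=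
      monotone_partialSum d (Fin.castSucc_le_castSucc_iff.2 hpk)
    rw [← Fin.succ_castSucc, Fin.partialSum_succ] at hlt
    have ascent : σ k.castSucc < σ k.succ := by
      by_contra! hle
      have := h.le_of_descent k.castSucc (by rwa [Fin.coeSucc_eq_succ])
      omega
    rcases hpk.eq_or_lt with rfl | hpk
    · exact ascent
    · exact (ih hpk (by omega)).trans ascent

lemma sort_ofGaps [NeZero b] (h : IsGapEncoding b q σ d) : Tuple.sort (ofGaps σ d) = σ := by
  refine (Tuple.eq_sort_iff.2 ⟨fun i j hij ↦ ?_, fun i j hij heq ↦ ?_⟩).symm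
  · simpa [ofGaps] using monotone_partialSum d (Fin.castSucc_le_castSucc_iff.2 hij)
  · simp only [ofGaps, Equiv.symm_apply_apply] at heq
    exact h.lt_of_partialSum_lt hij (by have := NeZero.pos b; omega)

lemma isSpaced_ofGaps (h : IsGapEncoding b q σ d) : IsSpaced_s4 b q (ofGaps σ d) where
  zero := by simp [ofGaps, (Equiv.symm_apply_eq σ).2 h.map_zero.symm]
  add_le j := by
    have last_gap : b ≤ d (Fin.last N) :=
      h.le_of_descent _ (by simp [Fin.last_add_one, h.map_zero])
    have total : Fin.partialSum d (Fin.last N).castSucc + d (Fin.last N) = q := by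
      rw [← Fin.partialSum_succ, Fin.succ_last, partialSum_last, h.sum_eq]
    have le_last : ofGaps σ d j ≤ Fin.partialSum d (Fin.last N).castSucc :=
      monotone_partialSum d (Fin.castSucc_le_castSucc_iff.2 (Fin.le_last _))
    omega
  add_le_of_lt i j hij hlt := by
    by_contra! hclose
    have hplace : σ.symm j < σ.symm i :=
      Fin.castSucc_lt_castSucc_iff.1 ((monotone_partialSum d).reflect_lt hlt)
    exact hij.asymm (by simpa using h.lt_of_partialSum_lt hplace hclose)

lemma sortedGaps_ofGaps [NeZero b] (h : IsGapEncoding b q σ d) :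
    sortedGaps q (ofGaps σ d) = d := by
  have levels : sortedLevels q (ofGaps σ d) = Fin.partialSum d := by
    funext i
    refine Fin.lastCases ?_ (fun p ↦ ?_) i
    · simp [sortedLevels, partialSum_last, h.sum_eq]
    · simp [sortedLevels, h.sort_ofGaps, ofGaps]
  funext p
  rw [sortedGaps, levels, Fin.partialSum_succ, Nat.add_sub_cancel_left]

end IsGapEncoding

namespace IsSpaced_s4

variable {x : Fin (N + 1) → ℕ}

lemma sort_zero (h : IsSpaced_s4 b q x) : Tuple.sort x 0 = 0 :=
  sort_zero_eq_zero fun i ↦ h.zero.symm ▸ Nat.zero_le (x i)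

lemma partialSum_sortedGaps (h : IsSpaced_s4 b q x) :
    Fin.partialSum (sortedGaps q x) = sortedLevels q x := by
  refine partialSum_succ_sub_castSucc (Fin.monotone_iff_le_succ.2 fun p ↦ ?_) ?_
  · induction p using Fin.lastCases with
    | last => simpa [sortedLevels] using (Nat.le_add_right _ b).trans (h.add_le _)
    | cast p =>
      simpa [sortedLevels, ← Fin.castSucc_succ] using Tuple.monotone_sort x p.castSucc_le_succ
  · rw [← Fin.castSucc_zero, sortedLevels, Fin.snoc_castSucc, Function.comp_apply, h.sort_zero,
      h.zero]

lemma ofGaps_sortedGaps (h : IsSpaced_s4 b q x) : ofGaps (Tuple.sort x) (sortedGaps q x) = x := by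
  funext i
  simp [ofGaps, h.partialSum_sortedGaps, sortedLevels]

lemma isGapEncoding (h : IsSpaced_s4 b q x) :
    IsGapEncoding b q (Tuple.sort x) (sortedGaps q x) where
  map_zero := h.sort_zero
  sum_eq := by simp [← partialSum_last, h.partialSum_sortedGaps, sortedLevels]
  le_of_descent p hdesc := by
    induction p using Fin.lastCases with
    | last =>
      simp only [sortedGaps, sortedLevels, Fin.succ_last, Fin.snoc_last, Fin.snoc_castSucc]
      exact Nat.le_sub_of_add_le' (h.add_le _)
    | cast p =>
      rw [Fin.coeSucc_eq_succ] at hdesc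
      simp only [sortedGaps, sortedLevels, Fin.succ_castSucc, Fin.snoc_castSucc,
        Function.comp_apply]
      have hlt : p.castSucc < p.succ := p.castSucc_lt_succ
      have hne : x (Tuple.sort x p.castSucc) ≠ x (Tuple.sort x p.succ) := fun heq ↦
        hdesc.not_gt ((Tuple.eq_sort_iff.1 rfl).2 _ _ hlt heq)
      refine Nat.le_sub_of_add_le' (h.add_le_of_lt _ _ (hdesc.lt_of_ne ?_)
        ((Tuple.monotone_sort x hlt.le).lt_of_ne hne))
      exact fun heq ↦ hlt.ne' ((Tuple.sort x).injective heq)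

end IsSpaced_s4

/-- A spaced tuple amounts to its cyclic word, written here as the pair `(d, σ)`. -/
def gapEquiv (N b q : ℕ) [NeZero b] : {x : Fin (N + 1) → ℕ // IsSpaced_s4 b q x} ≃
    {w : (Fin (N + 1) → ℕ) × Equiv.Perm (Fin (N + 1)) // IsGapEncoding b q w.2 w.1} where
  toFun x := ⟨(sortedGaps q x.1, Tuple.sort x.1), x.2.isGapEncoding⟩
  invFun w := ⟨ofGaps w.1.2 w.1.1, w.2.isSpaced_ofGaps⟩
  left_inv x := Subtype.ext x.2.ofGaps_sortedGaps
  right_inv w := Subtype.ext (Prod.ext w.2.sortedGaps_ofGaps w.2.sort_ofGaps)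

lemma finite_setOf_isGapEncoding (N b q : ℕ) :
    {w : (Fin (N + 1) → ℕ) × Equiv.Perm (Fin (N + 1)) | IsGapEncoding b q w.2 w.1}.Finite := by
  refine ((Set.finite_Iic fun _ ↦ q).prod Set.finite_univ).subset fun w hw ↦ ⟨fun p ↦ ?_, trivial⟩
  exact hw.sum_eq ▸ Finset.single_le_sum_of_canonicallyOrdered (Finset.mem_univ p)

end GapEncoding

section Residues

variable {N b q : ℕ}

/-- A tuple of natural numbers written as `e + b * g` with the entries of `e` reduced modulo `b`. -/
def tupleResidueEquiv (n b : ℕ) [NeZero b] : (Fin n → ℕ) ≃ (Fin n → ZMod b) × (Fin n → ℕ) :=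
  (Equiv.piCongrRight fun _ ↦ Nat.residueClassesEquiv b).trans
    (Equiv.arrowProdEquivProdArrow _ _ _)

lemma sum_tupleResidueEquiv_symm {n : ℕ} [NeZero b] (w : (Fin n → ZMod b) × (Fin n → ℕ)) :
    ∑ i, (tupleResidueEquiv n b).symm w i = ∑ i, (w.1 i).val + b * ∑ i, w.2 i := by
  rw [Finset.mul_sum, ← Finset.sum_add_distrib]
  rfl

lemma add_mul_sub_div_of_cast_eq {s : ℕ} (hs : s ≤ q) (h : (s : ZMod b) = q) :
    s + b * ((q - s) / b) = q := by
  rw [Nat.mul_div_cancel' ((Nat.modEq_iff_dvd' hs).1 ((ZMod.natCast_eq_natCast_iff _ _ _).1 h)),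
    Nat.add_sub_cancel' hs]

variable [NeZero b]

lemma sum_val_add_mul_eq {n : ℕ} {e : Fin n → ZMod b} (he : ∑ i, e i = q)
    (hle : ∑ i, (e i).val ≤ q) : ∑ i, (e i).val + b * ((q - ∑ i, (e i).val) / b) = q :=
  add_mul_sub_div_of_cast_eq hle (by simpa using he)

lemma isGapEncoding_add_mul_iff {m : ℕ} {w : (Fin (N + 1) → ZMod b) × (Fin (N + 1) → ℕ)}
    {σ : Equiv.Perm (Fin (N + 1))} (hq : ∑ p, (w.1 p).val + b * m = q) :
    IsGapEncoding b q σ ((tupleResidueEquiv _ b).symm w) ↔ IsGapEncoding 1 m σ w.2 := by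
  have hb : 0 < b := NeZero.pos b
  have sum_iff : ∑ p, (tupleResidueEquiv _ b).symm w p = q ↔ ∑ p, w.2 p = m := by
    rw [sum_tupleResidueEquiv_symm, ← hq, Nat.add_left_cancel_iff, Nat.mul_right_inj hb.ne']
  have le_iff (p) : b ≤ (tupleResidueEquiv _ b).symm w p ↔ 1 ≤ w.2 p := by
    change b ≤ (w.1 p).val + b * w.2 p ↔ _
    rcases Nat.eq_zero_or_pos (w.2 p) with hg | hg
    · simpa [hg] using (w.1 p).val_lt
    · exact iff_of_true ((Nat.le_mul_of_pos_right b hg).trans (Nat.le_add_left _ _)) hg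
  exact ⟨fun h ↦ ⟨h.map_zero, sum_iff.1 h.sum_eq, fun p hp ↦ (le_iff p).1 (h.le_of_descent p hp)⟩,
    fun h ↦ ⟨h.map_zero, sum_iff.2 h.sum_eq, fun p hp ↦ (le_iff p).2 (h.le_of_descent p hp)⟩⟩

lemma isGapEncoding_tupleResidueEquiv_symm_iff
    {w : (Fin (N + 1) → ZMod b) × (Fin (N + 1) → ℕ)} {σ : Equiv.Perm (Fin (N + 1))}
    (hle : ∑ p, (w.1 p).val ≤ q) :
    IsGapEncoding b q σ ((tupleResidueEquiv _ b).symm w) ↔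
      ∑ p, w.1 p = q ∧ IsGapEncoding 1 ((q - ∑ p, (w.1 p).val) / b) σ w.2 := by
  refine ⟨fun h ↦ ?_, fun ⟨hsum, h⟩ ↦
    (isGapEncoding_add_mul_iff (sum_val_add_mul_eq hsum hle)).2 h⟩
  have hsum : ∑ p, w.1 p = q := by simp [← h.sum_eq, sum_tupleResidueEquiv_symm]
  exact ⟨hsum, (isGapEncoding_add_mul_iff (sum_val_add_mul_eq hsum hle)).1 h⟩

theorem card_isSpaced_eq_sum (hlt : ∀ e : Fin (N + 1) → ZMod b, ∑ i, (e i).val < q) :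
    Nat.card {x : Fin (N + 1) → ℕ // IsSpaced_s4 b q x} =
      ∑ e : Fin (N + 1) → ZMod b with ∑ i, e i = (q : ZMod b),
        ((q - ∑ i, (e i).val) / b) ^ N := by
  let m (e : Fin (N + 1) → ZMod b) : ℕ := (q - ∑ i, (e i).val) / b
  let IsSplit (e : Fin (N + 1) → ZMod b)
      (w : (Fin (N + 1) → ℕ) × Equiv.Perm (Fin (N + 1))) : Prop :=
    ∑ i, e i = (q : ZMod b) ∧ IsGapEncoding 1 (m e) w.2 w.1
  let split : {x : Fin (N + 1) → ℕ // IsSpaced_s4 b q x} ≃ Σ e, {w // IsSplit e w} :=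
    (gapEquiv N b q).trans <|
      (Equiv.subtypeEquiv (q := fun w ↦ IsSplit w.1 w.2)
        (((tupleResidueEquiv (N + 1) b).prodCongr (.refl _)).trans (.prodAssoc _ _ _)) fun w ↦ by
          simpa using isGapEncoding_tupleResidueEquiv_symm_iff
            (w := tupleResidueEquiv _ b w.1) (σ := w.2) (hlt _).le).trans
      (Equiv.subtypeProdEquivSigmaSubtype IsSplit)
  have finite_split (e) : Finite {w // IsSplit e w} :=
    ((finite_setOf_isGapEncoding N 1 (m e)).subset fun _ hw ↦ hw.2).to_subtype
  rw [Nat.card_congr split, Nat.card_sigma, Finset.sum_filter]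
  refine Finset.sum_congr rfl fun e _ ↦ ?_
  split_ifs with he
  · have hm : 0 < m e := Nat.pos_of_ne_zero fun h0 ↦ (hlt e).ne <| by
      simpa [m, h0] using sum_val_add_mul_eq he (hlt e).le
    simp only [IsSplit, he, true_and]
    rw [← Nat.card_congr (gapEquiv N 1 (m e)), card_isSpaced_one hm]
  · simp [IsSplit, he]

theorem pow_mul_card_isSpaced {R : Type*} [CommRing R]
    (hlt : ∀ e : Fin (N + 1) → ZMod b, ∑ i, (e i).val < q) :
    (b : R) ^ N * Nat.card {x : Fin (N + 1) → ℕ // IsSpaced_s4 b q x} =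
      ∑ e : Fin (N + 1) → ZMod b with ∑ i, e i = (q : ZMod b),
        ((q : R) - ∑ i, ((e i).val : R)) ^ N := by
  rw [card_isSpaced_eq_sum hlt, Nat.cast_sum, Finset.mul_sum]
  refine Finset.sum_congr rfl fun e he ↦ ?_
  have hq := congrArg (Nat.cast (R := R))
    (sum_val_add_mul_eq (Finset.mem_filter.1 he).2 (hlt e).le)
  rw [Nat.cast_pow, ← mul_pow, ← hq]
  push_cast
  ring

end Residues

theorem statement4_general (n a : ℕ) (hn : n ≠ 0) (c : ℕ → ℕ)
    (hc : ∀ k, c k = (((∑ j ∈ Finset.range (a + 1), (X : Polynomial ℕ) ^ j)) ^ n).coeff k)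
    (q : ℕ) (hq : n * a < q) :
    ((a : ℚ) + 1) ^ n * (N_A n q 1 (a : ℤ) : ℚ) =
      (q : ℚ) * ∑ k ∈ Finset.range (n * a + 1),
        (c k : ℚ) * ((q : ℚ) - (k : ℚ)) ^ (n - 1) := by
  obtain ⟨N, rfl⟩ := Nat.exists_eq_add_one_of_ne_zero hn
  have haq : a < q := (Nat.le_mul_of_pos_left a N.succ_pos).trans_lt hq
  have hlt (e : Fin (N + 1) → ZMod (a + 1)) : ∑ i, (e i).val < q := (sum_zmod_val_le e).trans_lt hq
  have equidistribution :=
    card_mul_sum_eval_of_sum_eq (fun t : ZMod (a + 1) ↦ (t.val : ℚ))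
      (degree_C_sub_X_pow_lt (q : ℚ) N) (q : ZMod (a + 1))
  simp only [ZMod.card, eval_pow, eval_sub, eval_C, eval_X] at equidistribution
  rw [← pow_mul_card_isSpaced hlt] at equidistribution
  have coefficients := sum_range_coeff_sum_X_pow_mul Finset.univ
    (fun e : Fin (N + 1) → ZMod (a + 1) ↦ ∑ i, (e i).val)
    (fun e _ ↦ Nat.lt_succ_of_le (sum_zmod_val_le e)) fun k ↦ ((q : ℚ) - k) ^ N
  simp only [hc, geom_sum_pow_eq_sum_zmod, Nat.add_sub_cancel]
  rw [coefficients, N_A_succ_eq_mul_card_isSpaced haq]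
  push_cast at equidistribution ⊢
  rw [← equidistribution]
  ring

/-- Corollary 3.4. For `q > (a+1)n`,
`(a+1)^n ⬝ N_A(n,q,1,a) = q ⬝ ∑_{k=0}^{na} c_k (q-k)^(n-1)` as rational numbers,
where the `c_k` are the coefficients of `(1 + y + ... + y^a)^n`. -/
theorem statement4 (n a : ℕ) (hn : 2 ≤ n) (ha : 1 ≤ a)
    (c : ℕ → ℕ)
    (hc : ∀ k, c k = (((∑ j ∈ Finset.range (a + 1), (X : Polynomial ℕ) ^ j)) ^ n).coeff k)
    (q : ℕ) (hq : (a + 1) * n < q) :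
    ((a : ℚ) + 1) ^ n * (N_A n q 1 (a : ℤ) : ℚ) =
      (q : ℚ) * ∑ k ∈ Finset.range (n * a + 1),
        (c k : ℚ) * ((q : ℚ) - (k : ℚ)) ^ (n - 1) :=
  statement4_general n a (by omega) c hc q (by nlinarith)
end
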